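/- arXiv:2409.01634 — 2 statements merged into one kernel-verified Lean document; each statement's English description precedes it below -/
import Mathlib

section
/- Let G be a finite p-solvable group with O_{p'}(G) = 1 and non-abelian Sylow p-subgroup P. Let p^a = m(P) be the smallest degree of a non-linear irreducible character of P. Then there exists χ ∈ Irr(G) such that the p-part of χ(1) satisfies 1 ≠ χ(1)_p ≤ p^a. -/
open scoped BigOperators Classical

noncomputable section

/-- `χ` is the character of some irreducible complex representation of `G`. -/
def IsIrrChar {G : Type} [Group G] (χ : G → ℂ) : Prop :=
  ∃ V : FDRep ℂ G, CategoryTheory.Simple V ∧ FDRep.character V = χ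

/-- The degree of a character, as a natural number. -/
def charDeg {G : Type} [Group G] (χ : G → ℂ) : ℕ := ⌊(χ 1).re⌋₊

/-- `p`-part of a natural number: the largest power of `p` dividing `n`. -/
def pPart (p n : ℕ) : ℕ := p ^ (n.factorization p)

/-- Inner product of class functions on a finite group. -/
def charInner (G : Type) [Group G] [Fintype G] (α β : G → ℂ) : ℂ :=
  (Nat.card G : ℂ)⁻¹ * ∑ g : G, α g * (starRingEnd ℂ) (β g)

/-- Restriction of a class function to a subgroup. -/
def charRes {G : Type} [Group G] (H : Subgroup G) (χ : G → ℂ) : H → ℂ := fun h => χ (h : G)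

/-- Induced class function. -/
def charInd {G : Type} [Group G] [Fintype G] (U : Subgroup G) (τ : U → ℂ) : G → ℂ :=
  fun g => (Nat.card U : ℂ)⁻¹ * ∑ x : G, if h : x * g * x⁻¹ ∈ U then τ ⟨x * g * x⁻¹, h⟩ else 0

/-- `G` is `p`-solvable: it has a subnormal series each of whose factors is a
`p`-group or a `p'`-group (expressed element-wise). -/
def IsPSolvable (p : ℕ) (G : Type) [Group G] : Prop :=
  ∃ (n : ℕ) (s : Fin (n + 1) → Subgroup G),
    s 0 = ⊥ ∧ s (Fin.last n) = ⊤ ∧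
    ∀ i : Fin n, s i.castSucc ≤ s i.succ ∧
      ((s i.castSucc).subgroupOf (s i.succ)).Normal ∧
      ((∀ x ∈ s i.succ, ∃ k : ℕ, x ^ p ^ k ∈ s i.castSucc) ∨
       (∀ x ∈ s i.succ, ∃ m : ℕ, Nat.Coprime m p ∧ x ^ m ∈ s i.castSucc))

/-!
Suppose that no irreducible degree `d` of `G` satisfies `1 < d_p ≤ p ^ a`. If `σ` is a
representation of a subgroup `J` and `p ^ (a + 1)` does not divide `|G : J| * dim σ`, then the
representation induced by `σ` has an irreducible constituent of degree prime to `p`; by Clifford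
theory, a Sylow `p`-subgroup of `G` fixes a central character lying below it on any normal subgroup.
Central characters are recorded by the joint eigenvalues of the class sums.

Let `S ≤ P` have index at most `p ^ a ≤ m(P)`. Then `S` contains `P'`, so it is normal in `P`.
Moreover `P` is the only Sylow subgroup containing `S`: descending along a normal series of `G`,
the point is that `C_X(S) ≤ C_X(P)` for a normal `p'`-section `X`. By a congruence modulo `p`,
the classes of `X` that meet `C_X(S)` are separated by the central characters fixed by `S` whose
eigenspace in the permutation module of `XS` on `XS / S` has dimension prime to `p`. By the
previous paragraph these are fixed by a Sylow subgroup containing `S`.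

Now let `ψ` be an irreducible representation of `P` of degree `p ^ a > 1` and induct on `|G|`.
A normal `p'`-subgroup can be factored out. If `N` is an abelian normal `p`-subgroup, the stabilizer
in `P` of a linear constituent `ω` of `ψ_N` has index at most `p ^ a`, so `P` is the only Sylow
subgroup containing it; hence `ω` is fixed by `P` and `N` acts on `ψ` by scalars. A representation
of degree prime to `p` above `ω` has a determinant some power of which restricts to a linear
character of `P` extending `ω`. Twisting `ψ` by its inverse makes `N` act trivially, and `G` can be
replaced by `G / N`.
-/

open Module Representation

section Irreducible

variable {k G V : Type*} [Field k] [Group G] [AddCommGroup V] [Module k V]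
  {ρ : Representation k G V}

lemma isIrreducible_toRepresentation {U : Subrepresentation ρ} (hU : IsAtom U) :
    U.toRepresentation.IsIrreducible := by
  have : Nontrivial (Subrepresentation U.toRepresentation) :=
    ⟨⊥, ⊤, fun h ↦ hU.1 <| Subrepresentation.toSubmodule_injective <|
      U.toSubmodule.subsingleton_iff_eq_bot.mp <|
        (Submodule.subsingleton_iff k).mp <|
          subsingleton_of_bot_eq_top (congrArg Subrepresentation.toSubmodule h)⟩
  refine ⟨fun W ↦ ?_⟩
  let image : Subrepresentation ρ :=
    ⟨W.toSubmodule.map U.toSubmodule.subtype, by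
      rintro g _ ⟨v, hv, rfl⟩
      exact ⟨_, W.apply_mem_toSubmodule g hv, rfl⟩⟩
  have image_injective := Submodule.map_injective_of_injective U.toSubmodule.injective_subtype
  have image_le : image ≤ U := Submodule.map_subtype_le _ _
  refine (hU.le_iff.mp image_le).imp (fun h ↦ ?_) fun h ↦ ?_ <;>
    refine Subrepresentation.toSubmodule_injective (image_injective ?_) <;>
    refine (congrArg Subrepresentation.toSubmodule h).trans ?_
  · exact Submodule.map_bot _ |>.symm
  · exact (Submodule.map_subtype_top _).symm

lemma exists_eq_smul_one_of_commute [IsAlgClosed k] [FiniteDimensional k V]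
    (hρ : ρ.IsIrreducible) {A : End k V} (hA : ∀ g, Commute A (ρ g)) :
    ∃ c : k, A = c • 1 := by
  obtain ⟨c, hc⟩ := IsIrreducible.algebraMap_intertwiningMap_bijective_of_isAlgClosed.surjective
    (⟨A, fun g ↦ (hA g).eq⟩ : IntertwiningMap ρ ρ)
  exact ⟨c, congr(($hc).toLinearMap).symm⟩

variable [Finite G] [NeZero (Nat.card G : k)]

lemma exists_isAtom_le {U : Subrepresentation ρ} (hU : U ≠ ⊥) :
    ∃ W ≤ U, IsAtom W := by
  have : IsSemisimpleModule (MonoidAlgebra k G) ρ.asModule := inferInstance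
  have : IsAtomic (Subrepresentation ρ) :=
    Subrepresentation.subrepresentationSubmoduleOrderIso.isAtomic_iff.mpr inferInstance
  exact ((eq_bot_or_exists_atom_le U).resolve_left hU).imp fun W hW ↦ ⟨hW.2, hW.1⟩

lemma eq_top_of_forall_isAtom_le {U : Subrepresentation ρ} (hU : ∀ W, IsAtom W → W ≤ U) :
    U = ⊤ := by
  obtain ⟨C, hUC⟩ := exists_isCompl U
  suffices hC : C = ⊥ by rw [← hUC.sup_eq_top, hC, sup_bot_eq]
  by_contra hC
  obtain ⟨W, hWC, hW⟩ := exists_isAtom_le hC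
  exact hW.1 (le_bot_iff.mp (hUC.disjoint (hU W hW) hWC))

variable [FiniteDimensional k V]

lemma exists_isAtom_not_dvd_finrank (ρ : Representation k G V) {n : ℕ} (hn : ¬ n ∣ finrank k V) :
    ∃ W : Subrepresentation ρ, IsAtom W ∧ ¬ n ∣ finrank k W.toSubmodule := by
  obtain ⟨W, hW, W_min⟩ := WellFounded.has_min
    (measure fun W : Subrepresentation ρ ↦ finrank k W.toSubmodule).wf
    {W | ¬ n ∣ finrank k W.toSubmodule} ⟨⊤, by rwa [Set.mem_ofPred_eq, show
      (⊤ : Subrepresentation ρ).toSubmodule = ⊤ from rfl, finrank_top]⟩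
  have dvd_of_lt {B : Subrepresentation ρ} (hB : B < W) : n ∣ finrank k B.toSubmodule :=
    not_not.mp fun h ↦ W_min B h (Submodule.finrank_lt_finrank_of_lt hB)
  refine ⟨W, ⟨?_, fun B hBW ↦ ?_⟩, hW⟩
  · rintro rfl
    exact hW (by rw [show (⊥ : Subrepresentation ρ).toSubmodule = ⊥ from rfl, finrank_bot]; simp)
  by_contra hB
  obtain ⟨C, hBC⟩ := exists_isCompl B
  have sup_eq : B ⊔ C ⊓ W = W := by
    have modular : (B ⊔ C) ⊓ W = B ⊔ C ⊓ W :=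
      Subrepresentation.toSubmodule_injective (sup_inf_assoc_of_le C.toSubmodule hBW.le)
    rw [← modular, hBC.sup_eq_top, top_inf_eq]
  have inf_eq : B ⊓ (C ⊓ W) = ⊥ := by rw [← inf_assoc, hBC.inf_eq_bot, bot_inf_eq]
  have hCW : C ⊓ W < W := by
    refine inf_le_right.lt_of_ne fun h ↦ hB ?_
    rwa [h, inf_eq_left.mpr hBW.le] at inf_eq
  have finrank_add := Submodule.finrank_sup_add_finrank_inf_eq B.toSubmodule (C ⊓ W).toSubmodule
  rw [← Subrepresentation.toSubmodule_sup, ← Subrepresentation.toSubmodule_inf, sup_eq, inf_eq,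
    show (⊥ : Subrepresentation ρ).toSubmodule = ⊥ from rfl, finrank_bot, add_zero] at finrank_add
  exact hW (finrank_add ▸ dvd_add (dvd_of_lt hBW) (dvd_of_lt hCW))

end Irreducible

section Coinduction

variable {k G E : Type*} [Field k] [Group G] {J : Subgroup G} [AddCommGroup E] [Module k E]
  (σ : Representation k J E)

/-- Functions in the coinduced representation are determined by arbitrary values on a right
transversal `T` of `J`. -/
def coindVEquivPi {T : Set G} (hT : Subgroup.IsComplement (J : Set G) T) :
    coindV J.subtype σ ≃ₗ[k] (T → E) where
  toFun f t := f.1 t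
  map_add' _ _ := rfl
  map_smul' _ _ := rfl
  invFun e := ⟨fun g ↦ σ (hT.equiv g).1 (e (hT.equiv g).2), fun j g ↦ by
    simp only [J.subtype_apply, hT.equiv_mul_left, map_mul, End.mul_apply]⟩
  left_inv f := Subtype.ext <| funext fun g ↦ by
    conv_rhs => rw [← hT.equiv_fst_mul_equiv_snd g]
    exact (f.2 _ _).symm
  right_inv e := funext fun t ↦ by
    have h := hT.equiv_fst_eq_one_of_mem_of_one_mem J.one_mem t.2
    have h' := hT.equiv_snd_eq_self_of_mem_of_one_mem J.one_mem t.2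
    change σ (hT.equiv t).1 (e (hT.equiv t).2) = e t
    rw [h, h']
    exact congr($(map_one σ) (e t))

lemma finrank_coindV [J.FiniteIndex] [FiniteDimensional k E] :
    finrank k (coindV J.subtype σ) = J.index * finrank k E := by
  obtain ⟨T, hT, -⟩ := J.exists_isComplement_right 1
  have : Fintype T := hT.finite_right.fintype
  have hcard : Fintype.card T = J.index := by
    rw [← ENat.natCast_inj, ← hT.encard_right, ← Set.coe_fintypeCard]
  rw [(coindVEquivPi σ hT).finrank_eq, finrank_pi_fintype, Finset.sum_const, Finset.card_univ,
    hcard, smul_eq_mul]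

lemma exists_mem_coind_apply_one_ne_zero {U : Subrepresentation (coind J.subtype σ)}
    (hU : U ≠ ⊥) : ∃ f ∈ U, f.1 1 ≠ 0 := by
  contrapose! hU
  refine Subrepresentation.toSubmodule_injective <| (Submodule.eq_bot_iff _).mpr fun f hf ↦ ?_
  refine Subtype.ext <| funext fun g ↦ ?_
  exact congrArg f.1 (one_mul g).symm |>.trans (hU _ (U.apply_mem_toSubmodule g hf))

lemma exists_isAtom_coind_intertwiningMap_ne_zero [Finite G] [NeZero (Nat.card G : k)]
    [FiniteDimensional k E] {n : ℕ} (hn : ¬ n ∣ J.index * finrank k E) :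
    ∃ U : Subrepresentation (coind J.subtype σ), IsAtom U ∧ ¬ n ∣ finrank k U.toSubmodule ∧
      ∃ T : IntertwiningMap (U.toRepresentation.comp J.subtype) σ, T ≠ 0 := by
  obtain ⟨U, hU, hUn⟩ := exists_isAtom_not_dvd_finrank (coind J.subtype σ)
    (by rwa [finrank_coindV])
  obtain ⟨f, hf, hf1⟩ := exists_mem_coind_apply_one_ne_zero σ hU.1
  let evalOne : U.toSubmodule →ₗ[k] E :=
    LinearMap.proj 1 ∘ₗ (coindV J.subtype σ).subtype ∘ₗ U.toSubmodule.subtype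
  refine ⟨U, hU, hUn, ⟨evalOne, fun j ↦ LinearMap.ext fun f ↦ ?_⟩,
    fun h ↦ hf1 congr($h ⟨f, hf⟩)⟩
  change f.1.1 (1 * j) = σ j (f.1.1 1)
  simpa using f.1.2 j 1

end Coinduction

section OmittedDegrees

/-- No irreducible complex representation of `G` has a degree `d` with `1 < d_p ≤ p ^ a`, where
`d_p` is the `p`-part of `d`. -/
def OmitsSmallPParts (p a : ℕ) (G : Type) [Group G] : Prop :=
  ∀ (V : Type) [AddCommGroup V] [Module ℂ V] [FiniteDimensional ℂ V] (ρ : Representation ℂ G V),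
    ρ.IsIrreducible → p ∣ finrank ℂ V → p ^ (a + 1) ∣ finrank ℂ V

lemma OmitsSmallPParts.exists_isIrreducible_over {p a : ℕ} {G E : Type} [Group G] [Finite G]
    (hG : OmitsSmallPParts p a G) {J : Subgroup G} [AddCommGroup E] [Module ℂ E]
    [FiniteDimensional ℂ E] (σ : Representation ℂ J E)
    (hn : ¬ p ^ (a + 1) ∣ J.index * finrank ℂ E) :
    ∃ (V : Type) (_ : AddCommGroup V) (_ : Module ℂ V) (_ : FiniteDimensional ℂ V)
      (ρ : Representation ℂ G V), ρ.IsIrreducible ∧ ¬ p ∣ finrank ℂ V ∧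
      ∃ T : IntertwiningMap (ρ.comp J.subtype) σ, T ≠ 0 := by
  obtain ⟨U, hU, hUn, T, hT⟩ := exists_isAtom_coind_intertwiningMap_ne_zero σ hn
  have hirr := isIrreducible_toRepresentation hU
  exact ⟨U.toSubmodule, inferInstance, inferInstance, inferInstance, U.toRepresentation, hirr,
    fun h ↦ hUn (hG _ _ hirr h), T, hT⟩

end OmittedDegrees

section ClassSum

variable {k X V W : Type*} [Field k] [Group X] [Finite X] [AddCommGroup V] [Module k V]
  [AddCommGroup W] [Module k W] (τ : Representation k X V) {σ : Representation k X W}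

/-- The sum of the operators `τ (u * y * u⁻¹)` over all `u`, that is, the conjugacy class sum of `y`
multiplied by the order of the centralizer of `y`. -/
def classSum (y : X) : End k V :=
  letI := Fintype.ofFinite X
  ∑ u : X, τ (u * y * u⁻¹)

/-- The joint eigenspace of all class sums with eigenvalues `ω`. It is the sum of the isotypic
components whose central character is `ω`, up to the normalization in `classSum`. -/
def classEigenspace (ω : X → k) : Submodule k V :=
  ⨅ y, (classSum τ y).eigenspace (ω y)

variable {τ}

lemma mem_classEigenspace {ω : X → k} {v : V} :
    v ∈ classEigenspace τ ω ↔ ∀ y, classSum τ y v = ω y • v := by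
  simp only [classEigenspace, Submodule.mem_iInf, End.mem_eigenspace_iff]

lemma map_classSum_apply (α : X ≃* X) {T : V →ₗ[k] W} (hT : ∀ x v, T (τ x v) = σ (α x) (T v))
    (y : X) (v : V) : T (classSum τ y v) = classSum σ (α y) (T v) := by
  let _ := Fintype.ofFinite X
  simp only [classSum, LinearMap.sum_apply, map_sum, hT]
  exact Fintype.sum_equiv α.toEquiv _ _ fun u ↦ by simp

lemma map_mem_classEigenspace (α : X ≃* X) {T : V →ₗ[k] W}
    (hT : ∀ x v, T (τ x v) = σ (α x) (T v)) {ω : X → k} {v : V} (hv : v ∈ classEigenspace τ ω) :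
    T v ∈ classEigenspace σ (ω ∘ α.symm) :=
  mem_classEigenspace.mpr fun y ↦ by
    have h := map_classSum_apply α hT (α.symm y) v
    rw [α.apply_symm_apply] at h
    rw [← h, mem_classEigenspace.mp hv, map_smul, Function.comp_apply]

lemma intertwiningMap_apply_mem_classEigenspace (T : IntertwiningMap τ σ) {ω : X → k} {v : V}
    (hv : v ∈ classEigenspace τ ω) : T v ∈ classEigenspace σ ω :=
  map_mem_classEigenspace (MulEquiv.refl X) T.isIntertwining hv

lemma classSum_conj (y u : X) : classSum τ (u * y * u⁻¹) = classSum τ y := by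
  let _ := Fintype.ofFinite X
  exact Fintype.sum_equiv (Equiv.mulRight u) _ _ fun w ↦ by simp [mul_assoc]

lemma commute_classSum_apply (y x : X) : Commute (classSum τ y) (τ x) := by
  let _ := Fintype.ofFinite X
  rw [Commute, SemiconjBy, classSum, Finset.sum_mul, Finset.mul_sum]
  exact Fintype.sum_equiv (Equiv.mulLeft x⁻¹) _ _ fun u ↦ by
    rw [← map_mul, ← map_mul]
    simp [mul_assoc]

lemma commute_classSum (y z : X) : Commute (classSum τ y) (classSum τ z) := by
  conv => arg 2; rw [classSum]
  exact Commute.sum_right _ _ _ fun u _ ↦ commute_classSum_apply y _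

lemma apply_mem_classEigenspace {ω : X → k} (x : X) {v : V} (hv : v ∈ classEigenspace τ ω) :
    τ x v ∈ classEigenspace τ ω :=
  mem_classEigenspace.mpr fun y ↦ by
    rw [← End.mul_apply, (commute_classSum_apply y x).eq, End.mul_apply,
      mem_classEigenspace.mp hv, map_smul]

lemma iSupIndep_classEigenspace (τ : Representation k X V) :
    iSupIndep fun ω : X → k ↦ classEigenspace τ ω :=
  (End.independent_iInf_maxGenEigenspace_of_forall_mapsTo (classSum τ) fun y z ↦
    End.mapsTo_maxGenEigenspace_of_comm (commute_classSum z y)).mono fun _ ↦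
      iInf_mono fun _ ↦ End.genEigenspace_le_maximal _ _ _

lemma eq_of_classEigenspace_ne_bot {ω : X → k} (hω : classEigenspace τ ω ≠ ⊥) (y u : X) :
    ω (u * y * u⁻¹) = ω y := by
  obtain ⟨v, hv, hv0⟩ := (Submodule.ne_bot_iff _).mp hω
  refine smul_left_injective k hv0 ?_
  simp only
  rw [← mem_classEigenspace.mp hv, ← mem_classEigenspace.mp hv, classSum_conj]

lemma isIntegral_classSum (y : X) : IsIntegral ℤ (classSum τ y) := by
  let _ := Fintype.ofFinite X
  let toEnd : MonoidAlgebra ℤ X →ₐ[ℤ] End k V := MonoidAlgebra.lift ℤ _ X τ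
  have h : classSum τ y = toEnd (∑ u : X, MonoidAlgebra.of ℤ X (u * y * u⁻¹)) := by
    simp [classSum, toEnd]
  rw [h]
  exact (Algebra.IsIntegral.isIntegral _).map toEnd

lemma isIntegral_of_hasEigenvector {A : End k V} (hA : IsIntegral ℤ A) {μ : k} {v : V}
    (hv : A.HasEigenvector μ v) : IsIntegral ℤ μ := by
  obtain ⟨q, q_monic, hq⟩ := hA
  refine ⟨q, q_monic, ?_⟩
  have h := End.aeval_apply_of_hasEigenvector (p := q.map (algebraMap ℤ k)) hv
  rw [Polynomial.aeval_map_algebraMap, Polynomial.aeval_def, hq, Polynomial.eval_map] at h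
  exact (smul_eq_zero.mp h.symm).resolve_right hv.2

lemma isIntegral_of_classEigenspace_ne_bot {ω : X → k} (hω : classEigenspace τ ω ≠ ⊥) (y : X) :
    IsIntegral ℤ (ω y) := by
  obtain ⟨v, hv, hv0⟩ := (Submodule.ne_bot_iff _).mp hω
  exact isIntegral_of_hasEigenvector (isIntegral_classSum y)
    ⟨End.mem_eigenspace_iff.mpr (mem_classEigenspace.mp hv y), hv0⟩

section Decomposition

variable [FiniteDimensional k V]

lemma finite_setOf_classEigenspace_ne_bot (τ : Representation k X V) :
    {ω : X → k | classEigenspace τ ω ≠ ⊥}.Finite :=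
  WellFoundedGT.finite_ne_bot_of_iSupIndep (iSupIndep_classEigenspace τ)

variable [IsAlgClosed k]

lemma exists_le_classEigenspace {U : Subrepresentation τ} (hU : IsAtom U) :
    ∃ ω, U.toSubmodule ≤ classEigenspace τ ω := by
  have hirr := isIrreducible_toRepresentation hU
  choose ω hω using fun y ↦
    exists_eq_smul_one_of_commute hirr (commute_classSum_apply (τ := U.toRepresentation) y)
  let inclusion : IntertwiningMap U.toRepresentation τ := ⟨U.toSubmodule.subtype, fun _ ↦ rfl⟩
  refine ⟨ω, fun v hv ↦ intertwiningMap_apply_mem_classEigenspace inclusion (v := ⟨v, hv⟩) ?_⟩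
  exact mem_classEigenspace.mpr fun y ↦ congr($(hω y) _)

variable [NeZero (Nat.card X : k)]

lemma iSup_classEigenspace_eq_top (τ : Representation k X V) :
    ⨆ ω : X → k, classEigenspace τ ω = ⊤ := by
  have iSup_le_comap (x : X) : ⨆ ω : X → k, classEigenspace τ ω ≤
      (⨆ ω : X → k, classEigenspace τ ω).comap (τ x) :=
    iSup_le fun ω _ hv ↦ Submodule.mem_iSup_of_mem ω (apply_mem_classEigenspace x hv)
  let U : Subrepresentation τ := ⟨⨆ ω : X → k, classEigenspace τ ω, fun x _ hv ↦ iSup_le_comap x hv⟩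
  have hU : U = ⊤ := eq_top_of_forall_isAtom_le fun W hW ↦ by
    obtain ⟨ω, hω⟩ := exists_le_classEigenspace hW
    exact hω.trans (le_iSup (classEigenspace τ) ω)
  exact congrArg Subrepresentation.toSubmodule hU

lemma trace_classSum_mul_classSum (τ : Representation k X V) (y z : X) :
    LinearMap.trace k V (classSum τ y * classSum τ z) =
      ∑ ω ∈ (finite_setOf_classEigenspace_ne_bot τ).toFinset,
        ω y * ω z * (finrank k (classEigenspace τ ω) : k) := by
  have internal : DirectSum.IsInternal fun ω : X → k ↦ classEigenspace τ ω :=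
    (DirectSum.isInternal_submodule_iff_iSupIndep_and_iSup_eq_top _).mpr
      ⟨iSupIndep_classEigenspace τ, iSup_classEigenspace_eq_top τ⟩
  have apply_eq {ω : X → k} {v : V} (hv : v ∈ classEigenspace τ ω) :
      (classSum τ y * classSum τ z) v = (ω y * ω z) • v := by
    rw [End.mul_apply, mem_classEigenspace.mp hv, map_smul, mem_classEigenspace.mp hv, smul_smul,
      mul_comm]
  have mapsTo (ω : X → k) : Set.MapsTo (classSum τ y * classSum τ z) (classEigenspace τ ω)
      (classEigenspace τ ω) := fun v hv ↦ by
    rw [apply_eq hv]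
    exact Submodule.smul_mem _ _ hv
  rw [LinearMap.trace_eq_sum_trace_restrict' internal (finite_setOf_classEigenspace_ne_bot τ)
    mapsTo]
  refine Finset.sum_congr rfl fun ω _ ↦ ?_
  have restrict_eq : (classSum τ y * classSum τ z).restrict (mapsTo ω) = (ω y * ω z) • 1 :=
    LinearMap.ext fun v ↦ Subtype.ext (apply_eq v.2)
  rw [restrict_eq, map_smul, LinearMap.trace_one, smul_eq_mul]

end Decomposition

lemma trace_classSum_mul_classSum_eq_card_mul [Fintype X] (τ : Representation k X V) (y z : X) :
    LinearMap.trace k V (classSum τ y * classSum τ z) =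
      Nat.card X * ∑ u : X, LinearMap.trace k V (τ (u * y * u⁻¹ * z)) := by
  have trace_conj (w : X) : LinearMap.trace k V (classSum τ y * τ (w * z * w⁻¹)) =
      LinearMap.trace k V (classSum τ y * τ z) := by
    have h : classSum τ y * τ (w * z * w⁻¹) = τ w * (classSum τ y * τ z * τ w⁻¹) := by
      rw [map_mul, map_mul, ← mul_assoc, ← mul_assoc, (commute_classSum_apply y w).eq]
      simp only [mul_assoc]
    rw [h, LinearMap.trace_mul_comm, mul_assoc, ← map_mul τ, inv_mul_cancel, map_one, mul_one]
  have classSum_eq (x : X) : classSum τ x = ∑ w : X, τ (w * x * w⁻¹) := by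
    rw [classSum]
    congr!
  rw [classSum_eq z, Finset.mul_sum, map_sum, Finset.sum_congr rfl fun w _ ↦ trace_conj w,
    Finset.sum_const, classSum_eq y, Finset.sum_mul, map_sum, nsmul_eq_mul, Finset.card_univ,
    Nat.card_eq_fintype_card]
  simp only [map_mul]

end ClassSum

section Clifford

variable {k A Ω V : Type*} [Field k] [Group A] [MulAction A Ω] [AddCommGroup V] [Module k V]
  [FiniteDimensional k V] {ρ : Representation k A V} {S : Ω → Submodule k V}

lemma finrank_smul_eq_of_apply_mem (hS : ∀ a ω, ∀ v ∈ S ω, ρ a v ∈ S (a • ω)) (a : A) (ω : Ω) :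
    finrank k (S (a • ω)) = finrank k (S ω) := by
  have le_smul (a : A) (ω : Ω) : finrank k (S ω) ≤ finrank k (S (a • ω)) :=
    LinearMap.finrank_le_finrank_of_injective (f := (ρ a).restrict (hS a ω)) fun v w h ↦
      Subtype.ext ((ρ.apply_bijective a).injective congr(($h).1))
  exact ((le_smul a⁻¹ (a • ω)).trans_eq (by rw [inv_smul_smul])).antisymm (le_smul a ω)

lemma finrank_eq_index_stabilizer_mul_finrank (hρ : ρ.IsIrreducible) (hSind : iSupIndep S)
    (hS : ∀ a ω, ∀ v ∈ S ω, ρ a v ∈ S (a • ω)) {ω : Ω} (hω : S ω ≠ ⊥) :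
    finrank k V = (MulAction.stabilizer A ω).index * finrank k (S ω) := by
  let N (i : MulAction.orbit A ω) : Submodule k V := S i
  have finrank_N (i : MulAction.orbit A ω) : finrank k (N i) = finrank k (S ω) := by
    obtain ⟨_, a, rfl⟩ := i
    exact finrank_smul_eq_of_apply_mem hS a ω
  have N_indep : iSupIndep N := hSind.comp Subtype.val_injective
  have : Finite (MulAction.orbit A ω) := WellFoundedGT.finite_of_iSupIndep N_indep fun i h ↦
    hω (Submodule.finrank_eq_zero.mp (finrank_N i ▸ Submodule.finrank_eq_zero.mpr h))
  have := Fintype.ofFinite (MulAction.orbit A ω)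
  have iSup_le_comap (a : A) : ⨆ i, N i ≤ (⨆ i, N i).comap (ρ a) :=
    iSup_le fun i v hv ↦ Submodule.mem_iSup_of_mem (a • i) (hS a i v hv)
  let U : Subrepresentation ρ := ⟨⨆ i, N i, fun a _ hv ↦ iSup_le_comap a hv⟩
  have U_ne_bot : U ≠ ⊥ := fun h ↦ hω <| le_bot_iff.mp <|
    (le_iSup N ⟨ω, MulAction.mem_orbit_self ω⟩).trans_eq congr(($h).toSubmodule)
  have iSup_N : ⨆ i, N i = ⊤ :=
    congr(($(hρ.eq_bot_or_eq_top U |>.resolve_left U_ne_bot)).toSubmodule)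
  have internal : DirectSum.IsInternal N :=
    (DirectSum.isInternal_submodule_iff_iSupIndep_and_iSup_eq_top N).mpr ⟨N_indep, iSup_N⟩
  rw [← (LinearEquiv.ofBijective (DirectSum.coeLinearMap N) internal).finrank_eq,
    finrank_directSum, Finset.sum_congr rfl fun i _ ↦ finrank_N i, Finset.sum_const,
    MulAction.index_stabilizer, smul_eq_mul, Finset.card_univ, ← Nat.card_eq_fintype_card,
    Nat.card_coe_set_eq]

end Clifford

section OrbitSum

variable {S Ω M : Type*} [Group S] {p : ℕ} [Fact p.Prime] [MulAction S Ω] [AddCommGroup M]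
  {N : AddSubgroup M} {f : Ω → M}

lemma ncard_orbit_nsmul_mem (hS : IsPGroup p S) {ω : Ω} [Finite (MulAction.orbit S ω)]
    (hpf : p • f ω ∈ N) (hfix : ω ∈ MulAction.fixedPoints S Ω → f ω ∈ N) :
    Nat.card (MulAction.orbit S ω) • f ω ∈ N := by
  obtain ⟨n, hn⟩ := hS.card_orbit ω
  rcases n with _ | n
  · rw [pow_zero] at hn
    have := (Nat.card_eq_one_iff_unique.mp hn).1
    rw [hn, one_smul]
    exact hfix (MulAction.subsingleton_orbit_iff_mem_fixedPoints.mp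
      (Set.subsingleton_coe _ |>.mp this))
  · rw [hn, pow_succ, mul_smul]
    exact nsmul_mem hpf _

lemma sum_mem_of_isPGroup [Fintype Ω] (hS : IsPGroup p S) (hf : ∀ (s : S) ω, f (s • ω) = f ω)
    (hpf : ∀ ω, p • f ω ∈ N) (hfix : ∀ ω ∈ MulAction.fixedPoints S Ω, f ω ∈ N) :
    ∑ ω, f ω ∈ N := by
  let orbitOf (ω : Ω) : MulAction.orbitRel.Quotient S Ω := Quotient.mk'' ω
  have := Fintype.ofFinite (MulAction.orbitRel.Quotient S Ω)
  rw [← Finset.sum_fiberwise Finset.univ orbitOf f]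
  refine sum_mem fun q _ ↦ ?_
  induction q using Quotient.inductionOn' with
  | h ω =>
  have orbitOf_eq (x : Ω) : orbitOf x = Quotient.mk'' ω ↔ x ∈ MulAction.orbit S ω :=
    Quotient.eq''.trans MulAction.orbitRel_apply
  have card_filter : (Finset.univ.filter fun x ↦ orbitOf x = Quotient.mk'' ω).card =
      Nat.card (MulAction.orbit S ω) := by
    rw [Nat.card_coe_set_eq, ← Set.ncard_coe_finset]
    congr 1
    ext x
    simp [orbitOf_eq]
  have f_eq : ∀ x ∈ Finset.univ.filter fun x ↦ orbitOf x = Quotient.mk'' ω, f x = f ω := by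
    intro x hx
    obtain ⟨s, rfl⟩ := (orbitOf_eq x).mp (Finset.mem_filter.mp hx).2
    exact hf s ω
  rw [Finset.sum_congr rfl f_eq, Finset.sum_const, card_filter]
  exact ncard_orbit_nsmul_mem hS (hpf ω) (hfix ω)

lemma finset_sum_mem_of_isPGroup (hS : IsPGroup p S) {t : Finset Ω}
    (ht : ∀ (s : S), ∀ ω ∈ t, s • ω ∈ t) (hf : ∀ (s : S), ∀ ω ∈ t, f (s • ω) = f ω)
    (hpf : ∀ ω ∈ t, p • f ω ∈ N) (hfix : ∀ ω ∈ t, ω ∈ MulAction.fixedPoints S Ω → f ω ∈ N) :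
    ∑ ω ∈ t, f ω ∈ N := by
  let A : SubMulAction S Ω := ⟨t, fun s _ ↦ ht s _⟩
  have : Fintype A := t.fintypeCoeSort
  rw [Finset.sum_subtype t (fun _ ↦ Iff.rfl : ∀ ω, ω ∈ t ↔ ω ∈ A)]
  exact sum_mem_of_isPGroup (Ω := A) hS (fun s ω ↦ hf s ω ω.2) (fun ω ↦ hpf ω ω.2)
    fun ω hω ↦ hfix ω ω.2 fun s ↦ congrArg Subtype.val (hω s)

end OrbitSum

section Integrality

lemma dvd_of_natCast_eq_mul_isIntegral {k : Type*} [Field k] [CharZero k] {p n : ℕ} {z : k}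
    (hz : IsIntegral ℤ z) (hn : (n : k) = p * z) : p ∣ n := by
  rcases eq_or_ne p 0 with rfl | hp
  · rw [Nat.cast_zero, zero_mul, Nat.cast_eq_zero] at hn
    rw [hn]
  have z_eq : z = algebraMap ℚ k (n / p) := by
    rw [map_div₀, map_natCast, map_natCast, hn, mul_div_cancel_left₀ _ (Nat.cast_ne_zero.mpr hp)]
  rw [z_eq, isIntegral_algebraMap_iff (algebraMap ℚ k).injective] at hz
  obtain ⟨m, hm⟩ := IsIntegrallyClosed.isIntegral_iff.mp hz
  refine Int.natCast_dvd_natCast.mp ⟨m, ?_⟩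
  rw [← Int.cast_inj (α := ℚ)]
  push_cast
  rw [show (m : ℚ) = n / p from hm, mul_div_cancel₀ _ (Nat.cast_ne_zero.mpr hp)]

end Integrality

section ConjugationAction

/-- The conjugation action of `G` on the functions on a normal subgroup `X`: if `ω` gives the
eigenvalues of the class sums of a representation of `X`, then `g • ω` gives those of its conjugate
by `g`. -/
instance conjArrowAction {k G : Type*} [Group G] (X : Subgroup G) [X.Normal] :
    MulAction G (X → k) :=
  letI := MulAction.compHom X (MulAut.conjNormal : G →* MulAut X)
  arrowAction

section Functions

variable {k G : Type*} [Group G] {X : Subgroup G} [X.Normal] {ω : X → k}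

lemma conjArrow_smul_apply (g : G) (ω : X → k) (y : X) :
    (g • ω) y = ω (MulAut.conjNormal g⁻¹ y) := rfl

lemma apply_conjNormal_of_smul_eq {g : G} (h : g • ω = ω) (y : X) :
    ω (MulAut.conjNormal g y) = ω y := by
  conv_lhs => rw [← h, conjArrow_smul_apply, map_inv, MulAut.inv_apply_self]

lemma conjArrow_smul_apply_of_commute {g : G} {y : X} (h : Commute g y) (ω : X → k) :
    (g • ω) y = ω y := by
  rw [conjArrow_smul_apply]
  congr 1
  ext
  rw [MulAut.conjNormal_apply, h.inv_left.eq, mul_assoc, mul_inv_cancel, mul_one]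

lemma smul_eq_self_of_mem_of_conj_invariant (hω : ∀ y u : X, ω (u * y * u⁻¹) = ω y) {x : G}
    (hx : x ∈ X) : x • ω = ω := by
  ext y
  rw [conjArrow_smul_apply, ← hω y ⟨x⁻¹, inv_mem hx⟩]
  rfl

end Functions

variable {k G V : Type*} [Field k] [Group G] {X : Subgroup G} [X.Normal] [Finite X]
  [AddCommGroup V] [Module k V]

lemma map_mem_classEigenspace_smul {τ : Representation k X V} (g : G) {T : End k V}
    (hT : ∀ x v, T (τ x v) = τ (MulAut.conjNormal g x) (T v)) {ω : X → k} {v : V}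
    (hv : v ∈ classEigenspace τ ω) : T v ∈ classEigenspace τ (g • ω) := by
  have smul_eq : g • ω = ω ∘ (MulAut.conjNormal g : MulAut X).symm :=
    funext fun y ↦ by rw [conjArrow_smul_apply, map_inv]; rfl
  exact smul_eq ▸ map_mem_classEigenspace (MulAut.conjNormal g) hT hv

lemma apply_mem_classEigenspace_smul (ρ : Representation k G V) (g : G) (ω : X → k) {v : V}
    (hv : v ∈ classEigenspace (ρ.comp X.subtype) ω) :
    ρ g v ∈ classEigenspace (ρ.comp X.subtype) (g • ω) :=
  map_mem_classEigenspace_smul g (fun x v ↦ by simp [← End.mul_apply, ← map_mul]) hv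

lemma apply_mem_classEigenspace_inclusion_smul {J : Subgroup G} (hX : X ≤ J)
    (σ : Representation k J V) (j : J) (ω : X → k) {v : V}
    (hv : v ∈ classEigenspace (σ.comp (Subgroup.inclusion hX)) ω) :
    σ j v ∈ classEigenspace (σ.comp (Subgroup.inclusion hX)) (j • ω) := by
  refine map_mem_classEigenspace_smul (j : G) (fun x v ↦ ?_) hv
  have h : j * Subgroup.inclusion hX x =
      Subgroup.inclusion hX (MulAut.conjNormal (j : G) x) * j := Subtype.ext (by simp)
  simp only [MonoidHom.coe_comp, Function.comp_apply]
  rw [← End.mul_apply, ← map_mul, h, map_mul, End.mul_apply]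

end ConjugationAction

section Sylow

variable {G : Type*} [Group G] {p : ℕ} [Fact p.Prime]

lemma exists_sylow_between [Finite G] {S H : Subgroup G} (hS : IsPGroup p S) (hSH : S ≤ H)
    (hH : ¬ p ∣ H.index) : ∃ R : Sylow p G, S ≤ R ∧ R ≤ H := by
  obtain ⟨Q, hQ⟩ := (hS.comap_subtype (K := H)).exists_le_sylow
  have hindex : ¬ p ∣ (Q.map H.subtype).index := by
    rw [Subgroup.index_map_subtype]
    exact (Fact.out : p.Prime).not_dvd_mul Q.not_dvd_index hH
  refine ⟨(Q.isPGroup'.map H.subtype).toSylow hindex, fun s hs ↦ ?_, Subgroup.map_subtype_le _⟩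
  exact ⟨⟨s, hSH hs⟩, hQ hs, rfl⟩

lemma exists_mem_inf_smul_eq [Finite (Sylow p G)] {P R : Sylow p G} {M K : Subgroup G} [M.Normal]
    (hP : P ≤ K) (hRK : R ≤ K) (hRM : R ≤ M ⊔ P) : ∃ l ∈ M ⊓ K, l • P = R := by
  have hPMK : P ≤ (M ⊔ P) ⊓ K := le_inf le_sup_right hP
  have hRMK : R ≤ (M ⊔ P) ⊓ K := le_inf hRM hRK
  obtain ⟨⟨g, hgM, hgK⟩, hg⟩ := MulAction.exists_smul_eq ((M ⊔ P) ⊓ K : Subgroup G)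
    (P.subtype hPMK) (R.subtype hRMK)
  rw [Sylow.smul_subtype] at hg
  have hgP : g • P = R := Sylow.subtype_injective hg
  obtain ⟨m, hm, q, hq, rfl⟩ := Subgroup.mem_sup_of_normal_left.mp hgM
  have hqP : q • P = P := Sylow.smul_eq_iff_mem_normalizer.mpr (Subgroup.le_normalizer hq)
  refine ⟨m, ⟨hm, ?_⟩, by rwa [mul_smul, hqP] at hgP⟩
  exact (Subgroup.mul_mem_cancel_right K (hP hq)).mp hgK

lemma disjoint_of_not_dvd_card {X Q : Subgroup G} (hX : ¬ p ∣ Nat.card X)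
    (hQ : IsPGroup p Q) : Disjoint X Q := by
  rw [Subgroup.disjoint_def]
  intro g hgX hgQ
  obtain ⟨n, hn⟩ := IsPGroup.iff_orderOf.mp hQ ⟨g, hgQ⟩
  rw [Subgroup.orderOf_mk] at hn
  have dvd_card : p ^ n ∣ Nat.card X := hn ▸ X.orderOf_dvd_natCard hgX
  rcases n.eq_zero_or_pos with rfl | hpos
  · exact orderOf_eq_one_iff.mp (hn.trans (pow_zero p))
  · exact absurd ((dvd_pow_self p hpos.ne').trans dvd_card) hX

lemma exists_sylow_fixing {k V : Type*} [Finite G] [Field k] [AddCommGroup V] [Module k V]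
    [FiniteDimensional k V] {ρ : Representation k G V} (hρ : ρ.IsIrreducible)
    (hdim : ¬ p ∣ finrank k V) {X : Subgroup G} [X.Normal] {ω : X → k}
    (hω : classEigenspace (ρ.comp X.subtype) ω ≠ ⊥) {S : Subgroup G} (hS : IsPGroup p S)
    (hSω : ∀ s ∈ S, s • ω = ω) :
    ∃ R : Sylow p G, S ≤ R ∧ ∀ r ∈ R, r • ω = ω := by
  have h := finrank_eq_index_stabilizer_mul_finrank hρ (iSupIndep_classEigenspace _)
    (fun g ω _ ↦ apply_mem_classEigenspace_smul ρ g ω) hω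
  obtain ⟨R, hSR, hR⟩ := exists_sylow_between hS (H := MulAction.stabilizer G ω) hSω
    fun hp ↦ hdim (h ▸ hp.mul_right _)
  exact ⟨R, hSR, hR⟩

end Sylow

section SmallIndex

open scoped commutatorElement

lemma apply_eq_one_of_mem_commutator {k G V : Type*} [Field k] [Group G] [AddCommGroup V]
    [Module k V] (hV : finrank k V = 1) (ρ : Representation k G V) {c : G}
    (hc : c ∈ commutator G) : ρ c = 1 := by
  have commute_end (A B : End k V) : Commute A B := by
    obtain ⟨a, ha, -⟩ := LinearMap.existsUnique_eq_smul_id_of_finrank_eq_one hV A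
    rw [ha]
    exact (Commute.one_left B).smul_left a
  suffices h : commutator G ≤ ρ.ker from h hc
  rw [commutator_def, Subgroup.commutator_le]
  intro a _ b _
  rw [MonoidHom.mem_ker, commutatorElement_def, map_mul, map_mul, map_mul,
    (commute_end (ρ a) (ρ b)).eq, mul_assoc (ρ b), ← map_mul, mul_inv_cancel, map_one, mul_one,
    ← map_mul, mul_inv_cancel, map_one]

lemma isIrreducible_of_forall_le_comap {k G H V : Type*} [Field k] [Group G] [Group H]
    [AddCommGroup V] [Module k V] {ρ : Representation k G V} {σ : Representation k H V}
    (hρ : ρ.IsIrreducible)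
    (hσρ : ∀ U : Submodule k V, (∀ h, U ≤ U.comap (σ h)) → ∀ g, U ≤ U.comap (ρ g)) :
    σ.IsIrreducible := by
  have := hρ.toNontrivial
  have : Nontrivial (Subrepresentation σ) :=
    ⟨⊥, ⊤, fun h ↦ bot_ne_top (α := Subrepresentation ρ) <|
      Subrepresentation.toSubmodule_injective congr(($h).toSubmodule)⟩
  refine ⟨fun U ↦ ?_⟩
  let U' : Subrepresentation ρ :=
    ⟨U.toSubmodule, hσρ U.toSubmodule fun h _ hv ↦ U.apply_mem_toSubmodule h hv⟩
  rcases hρ.eq_bot_or_eq_top U' with h | h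
  · exact .inl (Subrepresentation.toSubmodule_injective (congrArg (·.toSubmodule) h :))
  · exact .inr (Subrepresentation.toSubmodule_injective (congrArg (·.toSubmodule) h :))

lemma isIrreducible_comp_of_surjective {k G H V : Type*} [Field k] [Group G] [Group H]
    [AddCommGroup V] [Module k V] {ρ : Representation k H V} (hρ : ρ.IsIrreducible) {f : G →* H}
    (hf : Function.Surjective f) : IsIrreducible (ρ.comp f) :=
  isIrreducible_of_forall_le_comap hρ fun _ hU ↦ hf.forall.mpr hU

/-- Every irreducible complex representation of `P` has degree `1` or at least `n`, that is,
`n ≤ m(P)` whenever `m(P)` is defined. -/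
def NonlinearDegreesGE (n : ℕ) (P : Type) [Group P] : Prop :=
  ∀ (V : Type) [AddCommGroup V] [Module ℂ V] [FiniteDimensional ℂ V] (ρ : Representation ℂ P V),
    ρ.IsIrreducible → finrank ℂ V = 1 ∨ n ≤ finrank ℂ V

lemma NonlinearDegreesGE.of_surjective {n : ℕ} {P Q : Type} [Group P] [Group Q]
    (hP : NonlinearDegreesGE n P) {f : P →* Q} (hf : Function.Surjective f) :
    NonlinearDegreesGE n Q :=
  fun V _ _ _ ρ hρ ↦ hP V (ρ.comp f) (isIrreducible_comp_of_surjective hρ hf)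

lemma OmitsSmallPParts.of_surjective {p a : ℕ} {G H : Type} [Group G] [Group H]
    (hG : OmitsSmallPParts p a G) {f : G →* H} (hf : Function.Surjective f) :
    OmitsSmallPParts p a H :=
  fun V _ _ _ ρ hρ ↦ hG V (ρ.comp f) (isIrreducible_comp_of_surjective hρ hf)

lemma invariants_commutator_ofMulAction_eq_top {n : ℕ} {P Ω : Type} [Group P] [Finite P]
    [MulAction P Ω] [Finite Ω] [Nonempty Ω] (hP : NonlinearDegreesGE n P) (hn : Nat.card Ω ≤ n) :
    invariants ((ofMulAction ℂ P Ω).comp (commutator P).subtype) = ⊤ := by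
  have finrank_eq := finrank_eq_nat_card_basis (MonoidAlgebra.basis Ω ℂ)
  have : FiniteDimensional ℂ (MonoidAlgebra ℂ Ω) :=
    (MonoidAlgebra.basis Ω ℂ).finiteDimensional_of_finite
  let U : Subrepresentation (ofMulAction ℂ P Ω) :=
    ⟨_, fun g _ hv ↦ le_comap_invariants _ (commutator P) g hv⟩
  suffices h : U = ⊤ from congr(($h).toSubmodule)
  refine eq_top_of_forall_isAtom_le fun W hW ↦ ?_
  rcases hP _ _ (isIrreducible_toRepresentation hW) with W_linear | W_large
  · intro v hv c
    have h := apply_eq_one_of_mem_commutator W_linear W.toRepresentation c.2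
    exact congr(($h ⟨v, hv⟩).1)
  have W_eq_top : W = ⊤ := Subrepresentation.toSubmodule_injective <|
    Submodule.eq_top_of_finrank_eq (W.toSubmodule.finrank_le.antisymm (by omega))
  -- The constants form an invariant line, so an irreducible permutation representation is trivial.
  let one : MonoidAlgebra ℂ Ω := MonoidAlgebra.ofCoeff (Finsupp.equivFunOnFinite.symm 1)
  have one_mem : one ∈ U := fun c ↦ by
    ext x
    exact coeff_ofMulAction _ _ _
  have U_ne_bot : U ≠ ⊥ := fun h ↦ by
    have one_eq : one ∈ (⊥ : Subrepresentation (ofMulAction ℂ P Ω)) := h ▸ one_mem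
    exact one_ne_zero congr(($((Submodule.mem_bot ℂ).mp one_eq)).coeff (Classical.arbitrary Ω))
  exact ((W_eq_top ▸ hW : IsAtom (⊤ : Subrepresentation _)).le_iff.mp le_top).resolve_left
    U_ne_bot |>.ge.trans' le_top

lemma commutator_le_of_index_le {n : ℕ} {P : Type} [Group P] [Finite P]
    (hP : NonlinearDegreesGE n P) {S : Subgroup P} (hS : S.index ≤ n) : commutator P ≤ S := by
  intro c hc
  have h : MonoidAlgebra.single ((1 : P) : P ⧸ S) (1 : ℂ) ∈
      invariants ((ofMulAction ℂ P (P ⧸ S)).comp (commutator P).subtype) := by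
    rw [invariants_commutator_ofMulAction_eq_top hP hS]
    trivial
  have single_eq := (ofMulAction_single c ((1 : P) : P ⧸ S) (1 : ℂ)).symm.trans (h ⟨c, hc⟩)
  have smul_eq : c • ((1 : P) : P ⧸ S) = (1 : P) :=
    MonoidAlgebra.single_left_injective one_ne_zero single_eq
  rw [MulAction.Quotient.smul_mk, smul_eq_mul, mul_one, eq_comm, QuotientGroup.eq] at smul_eq
  simpa using smul_eq

lemma le_normalizer_of_relIndex_le {n : ℕ} {G : Type} [Group G] {P S : Subgroup G} [Finite P]
    (hP : NonlinearDegreesGE n P) (hSP : S ≤ P) (hS : S.relIndex P ≤ n) :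
    P ≤ Subgroup.normalizer (S : Set G) := by
  rw [← Subgroup.normal_subgroupOf_iff_le_normalizer hSP]
  exact Subgroup.Normal.of_commutator_le _ (commutator_le_of_index_le hP hS)

end SmallIndex

section CoprimeAction

lemma relIndex_sup_eq_relIndex {G : Type*} [Group G] (H X : Subgroup G) [X.Normal]
    [X.IsFiniteRelIndex H] : H.relIndex (H ⊔ X) = H.relIndex X := by
  have via_H := Subgroup.relIndex_mul_relIndex (X ⊓ H) H (H ⊔ X) inf_le_right le_sup_left
  have via_X := Subgroup.relIndex_mul_relIndex (X ⊓ H) X (H ⊔ X) inf_le_left le_sup_right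
  rw [← via_X, Subgroup.inf_relIndex_right, Subgroup.inf_relIndex_left,
    Subgroup.relIndex_sup_right, mul_comm] at via_H
  exact Nat.eq_of_mul_eq_mul_right (Nat.pos_of_ne_zero Subgroup.relIndex_ne_zero) via_H

open scoped Pointwise in
lemma mem_smul_sylow_iff {G : Type*} [Group G] {p : ℕ} {g z : G} {P : Sylow p G} :
    z ∈ g • P ↔ g⁻¹ * z * g ∈ P := by
  rw [← SetLike.mem_coe, Sylow.coe_smul, Set.mem_smul_set_iff_inv_smul_mem, ← map_inv,
    MulAut.smul_def, MulAut.conj_apply, inv_inv, SetLike.mem_coe]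

lemma eq_top_of_forall_exists_conj_mem {G : Type*} [Group G] [Finite G] {H : Subgroup G}
    (h : ∀ g : G, ∃ x, x⁻¹ * g * x ∈ H) : H = ⊤ := by
  let _ := Fintype.ofFinite G
  let _ : Fintype (MulAction.orbitRel.Quotient G (G ⧸ H)) := Fintype.ofFinite _
  let _ (g : G) : Fintype (MulAction.fixedBy (G ⧸ H) g) := Fintype.ofFinite _
  have one_le_card (g : G) : 1 ≤ Fintype.card (MulAction.fixedBy (G ⧸ H) g) := by
    obtain ⟨x, hx⟩ := h g
    refine Fintype.card_pos_iff.mpr ⟨(x : G ⧸ H), ?_⟩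
    rw [MulAction.mem_fixedBy, MulAction.Quotient.smul_mk, eq_comm, QuotientGroup.eq]
    simpa [mul_assoc] using hx
  have sum_le : ∑ g : G, Fintype.card (MulAction.fixedBy (G ⧸ H) g) ≤ ∑ _g : G, 1 := by
    have orbits_le_one : Fintype.card (MulAction.orbitRel.Quotient G (G ⧸ H)) ≤ 1 :=
      Fintype.card_le_one_iff_subsingleton.mpr
        ((MulAction.pretransitive_iff_subsingleton_quotient G (G ⧸ H)).mp inferInstance)
    rw [MulAction.sum_card_fixedBy_eq_card_orbits_mul_card_group, Finset.sum_const,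
      Finset.card_univ, smul_eq_mul, mul_one]
    exact mul_le_of_le_one_left' orbits_le_one
  have card_fixedBy_one := (Finset.sum_eq_sum_iff_of_le fun g _ ↦ one_le_card g).mp
    ((Finset.sum_le_sum fun g _ ↦ one_le_card g).antisymm sum_le) 1 (Finset.mem_univ 1)
  rw [← Subgroup.index_eq_one, card_fixedBy_one, Subgroup.index, ← Nat.card_eq_fintype_card,
    MulAction.fixedBy_one_eq_univ, Nat.card_univ]

variable {G : Type*} [Group G] {p : ℕ} [Fact p.Prime] {X S : Subgroup G} [X.Normal]
  {Q : Sylow p G}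

lemma commute_of_conj_mem_sylow (hX : ¬ p ∣ Nat.card X) {x s : G} (hx : x ∈ X) (hs : s ∈ Q)
    (hxs : x⁻¹ * s * x ∈ Q) : Commute x s := by
  have mem_X : x⁻¹ * s * x * s⁻¹ ∈ X := by
    rw [mul_assoc, mul_assoc]
    exact mul_mem (inv_mem hx) (by simpa [mul_assoc] using ‹X.Normal›.conj_mem x hx s)
  have h : x⁻¹ * s * x * s⁻¹ = 1 := Subgroup.disjoint_def.mp
    (disjoint_of_not_dvd_card hX Q.isPGroup') mem_X (mul_mem hxs (inv_mem hs))
  rw [mul_inv_eq_one, mul_assoc, inv_mul_eq_iff_eq_mul] at h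
  exact h.symm

variable [Finite G]

lemma not_dvd_index_of_le_sup (hX : ¬ p ∣ Nat.card X) {H : Subgroup G} (hQ : Q ≤ H ⊔ X) :
    ¬ p ∣ H.index := by
  have : X.IsFiniteRelIndex H := Subgroup.isFiniteRelIndex_iff_finiteIndex.mpr inferInstance
  rw [← Subgroup.relIndex_mul_index (le_sup_left : H ≤ H ⊔ X), relIndex_sup_eq_relIndex]
  exact (Fact.out : p.Prime).not_dvd_mul (mt (·.trans (H.relIndex_dvd_card X)) hX)
    (mt (·.trans (Subgroup.index_dvd_of_le hQ)) Q.not_dvd_index)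

lemma exists_conj_mem_centralizer_sylow (hX : ¬ p ∣ Nat.card X) (hSQ : S ≤ Q) {c : G}
    (hcS : c ∈ Subgroup.centralizer (S : Set G)) (hQ : Q ≤ X ⊔ Subgroup.centralizer {c}) :
    ∃ x ∈ X ⊓ Subgroup.centralizer (S : Set G),
      x⁻¹ * c * x ∈ Subgroup.centralizer (Q : Set G) := by
  let H := Subgroup.centralizer {c} ⊓ (X ⊔ Q)
  have hQH : Q ≤ H ⊔ X := by
    intro q hq
    obtain ⟨u, hu, z, hz, rfl⟩ := Subgroup.mem_sup_of_normal_left.mp (hQ hq)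
    refine mul_mem (le_sup_right (a := H) hu) (le_sup_left (b := X) ⟨hz, ?_⟩)
    exact (Subgroup.mul_mem_cancel_left _ (le_sup_left (b := Q.1) hu)).mp
      (le_sup_right (a := X) hq)
  have hSH : S ≤ H := le_inf (fun s hs ↦ Subgroup.mem_centralizer_singleton_iff.mpr
    (Subgroup.mem_centralizer_iff.mp hcS s hs)) (hSQ.trans le_sup_right)
  obtain ⟨R, hSR, hRH⟩ := exists_sylow_between (Q.isPGroup'.to_le hSQ) hSH
    (not_dvd_index_of_le_sup hX hQH)
  obtain ⟨x, ⟨hx, -⟩, rfl⟩ := exists_mem_inf_smul_eq (K := ⊤) le_top le_top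
    (hRH.trans inf_le_right)
  refine ⟨x, ⟨hx, fun s hs ↦ ?_⟩, fun q hq ↦ ?_⟩
  · exact (commute_of_conj_mem_sylow hX hx (hSQ hs) (mem_smul_sylow_iff.mp (hSR hs))).symm
  · have h : x * q * x⁻¹ ∈ x • Q := mem_smul_sylow_iff.mpr (by simpa [mul_assoc] using hq)
    have h' : Commute (x * q * x⁻¹) c := Subgroup.mem_centralizer_singleton_iff.mp (hRH h).1
    simpa [mul_assoc] using (h'.map (MulAut.conj x⁻¹)).eq

lemma inf_centralizer_le_centralizer_sylow (hX : ¬ p ∣ Nat.card X) (hSQ : S ≤ Q)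
    (h : ∀ c ∈ X ⊓ Subgroup.centralizer (S : Set G), ∀ q ∈ Q, ∃ u ∈ X, q * c * q⁻¹ = u * c * u⁻¹) :
    X ⊓ Subgroup.centralizer (S : Set G) ≤ Subgroup.centralizer (Q : Set G) := by
  rw [← Subgroup.subgroupOf_eq_top]
  refine eq_top_of_forall_exists_conj_mem fun c ↦ ?_
  have hQ : Q ≤ X ⊔ Subgroup.centralizer {c.1} := by
    intro q hq
    obtain ⟨u, hu, hqu⟩ := h c c.2 q hq
    have hcomm : u⁻¹ * q * c = c * (u⁻¹ * q) := by
      rw [mul_inv_eq_iff_eq_mul] at hqu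
      rw [mul_assoc, hqu]
      group
    rw [← mul_inv_cancel_left u q]
    exact mul_mem (le_sup_left (a := X) hu)
      (le_sup_right (a := X) (Subgroup.mem_centralizer_singleton_iff.mpr hcomm))
  obtain ⟨x, hx, hxc⟩ := exists_conj_mem_centralizer_sylow hX hSQ c.2.2 hQ
  exact ⟨⟨x, hx⟩, hxc⟩

end CoprimeAction

section SeparatingEigenvalues

lemma trace_ofMulAction_eq_zero {k G Ω : Type*} [Field k] [Group G] [MulAction G Ω] [Finite Ω]
    {g : G} (hg : ∀ x : Ω, g • x ≠ x) :
    LinearMap.trace k (MonoidAlgebra k Ω) (ofMulAction k G Ω g) = 0 := by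
  let _ := Fintype.ofFinite Ω
  rw [LinearMap.trace_eq_matrix_trace k (MonoidAlgebra.basis Ω k)]
  refine Finset.sum_eq_zero fun x _ ↦ ?_
  rw [Matrix.diag_apply, LinearMap.toMatrix_apply, MonoidAlgebra.basis_apply, ofMulAction_single]
  exact Finsupp.single_eq_of_ne' (hg x)

section VanishingTrace

variable {k X V : Type*} [Field k] [Group X] [Finite X] [AddCommGroup V] [Module k V]
  {τ : Representation k X V}

lemma trace_classSum_mul_classSum_inv_self [FiniteDimensional k V]
    (hτ : ∀ y ≠ 1, LinearMap.trace k V (τ y) = 0) (c : X) :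
    LinearMap.trace k V (classSum τ c * classSum τ c⁻¹) =
      (Nat.card X * (Nat.card (Subgroup.centralizer {c}) * finrank k V) : ℕ) := by
  let _ := Fintype.ofFinite X
  have trace_eq (u : X) : LinearMap.trace k V (τ (u * c * u⁻¹ * c⁻¹)) =
      if u ∈ Subgroup.centralizer {c} then (finrank k V : k) else 0 := by
    rw [Subgroup.mem_centralizer_singleton_iff, ← mul_inv_eq_iff_eq_mul,
      ← mul_inv_eq_one (a := u * c * u⁻¹)]
    split_ifs with h
    · rw [h, map_one, LinearMap.trace_one]
    · exact hτ _ h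
  rw [trace_classSum_mul_classSum_eq_card_mul, Nat.cast_mul]
  simp only [trace_eq, ← Finset.sum_filter, Finset.sum_const, nsmul_eq_mul]
  rw [Nat.cast_mul, Nat.card_eq_fintype_card (α := Subgroup.centralizer {c}),
    Fintype.card_subtype]

lemma trace_classSum_mul_classSum_inv_eq_zero
    (hτ : ∀ y ≠ 1, LinearMap.trace k V (τ y) = 0) {c d : X} (hcd : ¬ IsConj c d) :
    LinearMap.trace k V (classSum τ d * classSum τ c⁻¹) = 0 := by
  let _ := Fintype.ofFinite X
  rw [trace_classSum_mul_classSum_eq_card_mul, Finset.sum_eq_zero, mul_zero]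
  refine fun u _ ↦ hτ _ fun h ↦ hcd ?_
  exact (isConj_iff.mpr ⟨u, mul_inv_eq_one.mp h⟩).symm

lemma sum_sub_mul_finrank_classEigenspace [CharZero k] [IsAlgClosed k] [FiniteDimensional k V]
    (hτ : ∀ y ≠ 1, LinearMap.trace k V (τ y) = 0) {c d : X} (hcd : ¬ IsConj c d) :
    ∑ ω ∈ (finite_setOf_classEigenspace_ne_bot τ).toFinset,
        (ω c - ω d) * ω c⁻¹ * (finrank k (classEigenspace τ ω) : k) =
      (Nat.card X * (Nat.card (Subgroup.centralizer {c}) * finrank k V) : ℕ) := by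
  rw [← sub_zero (Nat.cast _), ← trace_classSum_mul_classSum_inv_self hτ c,
    ← trace_classSum_mul_classSum_inv_eq_zero hτ hcd, trace_classSum_mul_classSum,
    trace_classSum_mul_classSum, ← Finset.sum_sub_distrib]
  exact Finset.sum_congr rfl fun ω _ ↦ by ring

end VanishingTrace

variable {k G V : Type*} [Field k] [IsAlgClosed k] [CharZero k] [Group G]
  {p : ℕ} [Fact p.Prime] {X S J : Subgroup G} [X.Normal] [Finite X]
  [AddCommGroup V] [Module k V] [FiniteDimensional k V]

-- Modulo `p`, only the functions fixed by `S` contribute to the sum in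
-- `sum_sub_mul_finrank_classEigenspace`.
lemma exists_fixed_classEigenspace_apply_ne (hS : IsPGroup p S) (hXJ : X ≤ J) (hSJ : S ≤ J)
    {σ : Representation k J V} (hσ : ∀ y : X, y ≠ 1 →
      LinearMap.trace k V (σ (Subgroup.inclusion hXJ y)) = 0)
    (hX : ¬ p ∣ Nat.card X) (hV : ¬ p ∣ finrank k V) {c d : X} (hcd : ¬ IsConj c d)
    (hc : ∀ s ∈ S, Commute s (c : G)) (hd : ∀ s ∈ S, Commute s (d : G)) :
    ∃ ω : X → k, ¬ p ∣ finrank k (classEigenspace (σ.comp (Subgroup.inclusion hXJ)) ω) ∧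
      (∀ s ∈ S, s • ω = ω) ∧ ω c ≠ ω d := by
  by_contra! hcontra
  set τ := σ.comp (Subgroup.inclusion hXJ)
  have finrank_smul (s : S) (ω : X → k) :
      finrank k (classEigenspace τ (s • ω)) = finrank k (classEigenspace τ ω) :=
    finrank_smul_eq_of_apply_mem (ρ := σ)
      (fun j ω _ ↦ apply_mem_classEigenspace_inclusion_smul hXJ σ j ω) ⟨s, hSJ s.2⟩ ω
  have smul_apply (s : S) (ω : X → k) {y : X} (hy : Commute (s : G) y) : (s • ω) y = ω y :=
    conjArrow_smul_apply_of_commute hy ω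
  have integral {ω : X → k} (hω : classEigenspace τ ω ≠ ⊥) (n : ℕ) :
      IsIntegral ℤ ((ω c - ω d) * ω c⁻¹ * n) :=
    have h := isIntegral_of_classEigenspace_ne_bot hω
    (((h c).sub (h d)).mul (h c⁻¹)).mul (isIntegral_natCast n)
  let pIntegers : AddSubgroup k :=
    (integralClosure ℤ k).toSubring.toAddSubgroup.map (AddMonoidHom.mulLeft (p : k))
  have sum_mem : ((Nat.card X * (Nat.card (Subgroup.centralizer {c}) * finrank k V) : ℕ) : k) ∈
      pIntegers := by
    rw [← sum_sub_mul_finrank_classEigenspace (τ := τ) hσ hcd]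
    refine finset_sum_mem_of_isPGroup hS (fun s ω ↦ ?_) (fun s ω _ ↦ ?_) (fun ω hω ↦ ?_)
      fun ω hω hfix ↦ ?_
    · simp only [Set.Finite.mem_toFinset, Set.mem_ofPred_eq, ne_eq, ← Submodule.finrank_eq_zero,
        finrank_smul, imp_self]
    · rw [finrank_smul, smul_apply s ω (hc s s.2), smul_apply s ω (hd s s.2),
        smul_apply s ω (hc s s.2).inv_right]
    · exact ⟨_, integral (by simpa using hω) _, (nsmul_eq_mul p _).symm⟩
    · by_cases hp : p ∣ finrank k (classEigenspace τ ω)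
      · obtain ⟨m, hm⟩ := hp
        refine ⟨_, integral (by simpa using hω) m, ?_⟩
        simp only [hm, AddMonoidHom.coe_mulLeft, Nat.cast_mul]
        ring
      · rw [hcontra ω hp fun s hs ↦ hfix ⟨s, hs⟩, sub_self, zero_mul, zero_mul]
        exact zero_mem _
  obtain ⟨z, hz, hpz⟩ := sum_mem
  have hp : p.Prime := Fact.out
  exact hp.not_dvd_mul hX (hp.not_dvd_mul (mt (·.trans (Subgroup.card_subgroup_dvd_card _)) hX) hV)
    (dvd_of_natCast_eq_mul_isIntegral hz hpz.symm)

end SeparatingEigenvalues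

section CoprimeCentralizer

section Restriction

variable {k X J V W : Type*} [Field k] [IsAlgClosed k] [Group X] [Finite X]
  [NeZero (Nat.card X : k)] [Group J] [AddCommGroup V] [Module k V] [FiniteDimensional k V]
  [AddCommGroup W] [Module k W] {τ : Representation k J V} {σ : Representation k J W}

lemma exists_classEigenspace_ne_bot_of_intertwiningMap {T : IntertwiningMap τ σ} (hT : T ≠ 0)
    (f : X →* J) : ∃ ω : X → k, classEigenspace (τ.comp f) ω ≠ ⊥ ∧
      classEigenspace (σ.comp f) ω ≠ ⊥ := by
  by_contra! h
  have le_ker (ω : X → k) : classEigenspace (τ.comp f) ω ≤ LinearMap.ker T.toLinearMap := by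
    intro v hv
    by_cases hω : classEigenspace (τ.comp f) ω = ⊥
    · exact (hω ▸ bot_le : classEigenspace (τ.comp f) ω ≤ _) hv
    · have hTv : T v ∈ classEigenspace (σ.comp f) ω :=
        map_mem_classEigenspace (T := T.toLinearMap) (MulEquiv.refl X)
          (fun x ↦ IntertwiningMap.isIntertwining _ _ T (f x)) hv
      rwa [h ω hω] at hTv
  refine hT (IntertwiningMap.ext (LinearMap.ext fun v ↦ ?_))
  exact iSup_le le_ker (iSup_classEigenspace_eq_top (τ.comp f) ▸ Submodule.mem_top)

lemma classEigenspace_ne_bot_of_intertwiningMap {T : IntertwiningMap τ σ} (hT : T ≠ 0)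
    {f : X →* J} {ω : X → k} (hω : classEigenspace (σ.comp f) ω = ⊤) :
    classEigenspace (τ.comp f) ω ≠ ⊥ := by
  obtain ⟨ω', hτ, hσ⟩ := exists_classEigenspace_ne_bot_of_intertwiningMap hT f
  obtain rfl : ω' = ω := by
    by_contra hne
    have disjoint := (iSupIndep_classEigenspace (σ.comp f)).pairwiseDisjoint hne
    rw [Function.onFun, hω, disjoint_top] at disjoint
    exact hσ disjoint
  exact hτ

end Restriction

lemma trace_ofMulAction_quotient_eq_zero {k G : Type*} [Field k] [Group G] {X S : Subgroup G}
    [X.Normal] [S.FiniteIndex] (hXS : Disjoint X S) {x : G} (hx : x ∈ X) (hx1 : x ≠ 1) :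
    LinearMap.trace k (MonoidAlgebra k (G ⧸ S)) (ofMulAction k G (G ⧸ S) x) = 0 := by
  refine trace_ofMulAction_eq_zero fun q ↦ ?_
  induction q using QuotientGroup.induction_on with | H g
  rw [MulAction.Quotient.smul_mk, ne_eq, eq_comm, QuotientGroup.eq, smul_eq_mul]
  intro hg
  have mem_X : g⁻¹ * (x * g) ∈ X := by
    simpa [mul_assoc] using ‹X.Normal›.conj_mem x hx g⁻¹
  have h : g⁻¹ * (x * g) = 1 := Subgroup.disjoint_def.mp hXS mem_X hg
  exact hx1 (by simpa [inv_mul_eq_one] using h)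

/-- The joint eigenspace of the class sums of `X` for eigenvalues fixed by `J`. -/
def classEigenspaceSubrep {k G V : Type*} [Field k] [Group G] {X J : Subgroup G} [X.Normal]
    [Finite X] [AddCommGroup V] [Module k V] (hX : X ≤ J) (σ : Representation k J V) {ω : X → k}
    (hω : ∀ j ∈ J, j • ω = ω) : Subrepresentation σ :=
  ⟨classEigenspace (σ.comp (Subgroup.inclusion hX)) ω, fun j v hv ↦ by
    have h := apply_mem_classEigenspace_inclusion_smul hX σ j ω hv
    rwa [Subgroup.smul_def, hω j j.2] at h⟩

lemma classEigenspace_classEigenspaceSubrep_eq_top {k G V : Type*} [Field k] [Group G]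
    {X J : Subgroup G} [X.Normal] [Finite X] [AddCommGroup V] [Module k V] (hX : X ≤ J)
    (σ : Representation k J V) {ω : X → k} (hω : ∀ j ∈ J, j • ω = ω) :
    classEigenspace ((classEigenspaceSubrep hX σ hω).toRepresentation.comp
      (Subgroup.inclusion hX)) ω = ⊤ := by
  let U := classEigenspaceSubrep hX σ hω
  refine (Submodule.eq_top_iff').mpr fun v ↦ mem_classEigenspace.mpr fun y ↦ Subtype.ext ?_
  exact (map_classSum_apply (MulEquiv.refl X) (T := U.toSubmodule.subtype)
    (σ := σ.comp (Subgroup.inclusion hX)) (fun _ _ ↦ rfl) y v).trans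
    (mem_classEigenspace.mp v.2 y)

lemma exists_representation_classEigenspace_eq_top {k G : Type} [Field k] [IsAlgClosed k]
    [CharZero k] [Group G] [Finite G] {p : ℕ} [Fact p.Prime] {X S : Subgroup G} [X.Normal]
    (hX : ¬ p ∣ Nat.card X) (hS : IsPGroup p S) {c d : X} (hcd : ¬ IsConj c d)
    (hc : ∀ s ∈ S, Commute s (c : G)) (hd : ∀ s ∈ S, Commute s (d : G)) :
    ∃ (E : Type) (_ : AddCommGroup E) (_ : Module k E) (_ : FiniteDimensional k E)
      (σ : Representation k (X ⊔ S : Subgroup G) E) (ω : X → k), ¬ p ∣ finrank k E ∧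
      classEigenspace (σ.comp (Subgroup.inclusion le_sup_left)) ω = ⊤ ∧
      (∀ x ∈ X ⊔ S, x • ω = ω) ∧ ω c ≠ ω d := by
  let J := X ⊔ S
  have hXJ : X ≤ J := le_sup_left
  have hSJ : S ≤ J := le_sup_right
  let σ := ofMulAction k J (J ⧸ S.subgroupOf J)
  have disjoint : Disjoint (X.subgroupOf J) (S.subgroupOf J) := by
    rw [Subgroup.disjoint_def]
    exact fun hx hs ↦ Subtype.ext
      (Subgroup.disjoint_def.mp (disjoint_of_not_dvd_card hX hS) hx hs)
  have trace_eq_zero (y : X) (hy : y ≠ 1) :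
      LinearMap.trace k _ (σ (Subgroup.inclusion hXJ y)) = 0 :=
    trace_ofMulAction_quotient_eq_zero disjoint y.2
      fun h ↦ hy (Subgroup.inclusion_injective hXJ (h.trans (map_one _).symm))
  have : FiniteDimensional k (MonoidAlgebra k (J ⧸ S.subgroupOf J)) :=
    (MonoidAlgebra.basis _ k).finiteDimensional_of_finite
  have : X.IsFiniteRelIndex S := Subgroup.isFiniteRelIndex_iff_finiteIndex.mpr inferInstance
  have finrank_dvd : finrank k (MonoidAlgebra k (J ⧸ S.subgroupOf J)) ∣ Nat.card X := by
    rw [finrank_eq_nat_card_basis (MonoidAlgebra.basis _ k), ← Subgroup.index, ← Subgroup.relIndex,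
      show J = S ⊔ X from sup_comm X S, relIndex_sup_eq_relIndex]
    exact S.relIndex_dvd_card X
  obtain ⟨ω, hω, hSω, hωcd⟩ := exists_fixed_classEigenspace_apply_ne hS hXJ hSJ trace_eq_zero hX
    (mt (·.trans finrank_dvd) hX) hcd hc hd
  have hXω : ∀ x ∈ X, x • ω = ω := fun x ↦ smul_eq_self_of_mem_of_conj_invariant
    (eq_of_classEigenspace_ne_bot fun h ↦ hω (h ▸ by rw [finrank_bot]; exact dvd_zero p))
  have hJω : J ≤ MulAction.stabilizer G ω := sup_le hXω hSω
  let U := classEigenspaceSubrep hXJ σ hJω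
  exact ⟨U.toSubmodule, inferInstance, inferInstance, inferInstance, U.toRepresentation, ω, hω,
    classEigenspace_classEigenspaceSubrep_eq_top hXJ σ hJω, hJω, hωcd⟩

variable {p a : ℕ} [Fact p.Prime] {G : Type} [Group G] [Finite G] {X S : Subgroup G} [X.Normal]
  {P : Sylow p G}

lemma OmitsSmallPParts.exists_conj_eq_of_commute (hG : OmitsSmallPParts p a G)
    (hX : ¬ p ∣ Nat.card X) (hS : IsPGroup p S) (hindex : ¬ p ^ (a + 1) ∣ S.index)
    (hconj : ∀ R : Sylow p G, S ≤ R → ∃ x ∈ X, x • P = R) {c q : G} (hcX : c ∈ X)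
    (hc : ∀ s ∈ S, Commute s c) (hq : q ∈ P) (hqc : ∀ s ∈ S, Commute s (q * c * q⁻¹)) :
    ∃ u ∈ X, q * c * q⁻¹ = u * c * u⁻¹ := by
  have hqcX : q * c * q⁻¹ ∈ X := ‹X.Normal›.conj_mem c hcX q
  by_contra! hne
  have not_isConj : ¬ IsConj (⟨c, hcX⟩ : X) ⟨_, hqcX⟩ := by
    intro h
    obtain ⟨u, hu⟩ := isConj_iff.mp h
    exact hne u u.2 congr(($hu : G)).symm
  obtain ⟨E, _, _, _, σ, ω, hE, htop, hω, hωne⟩ :=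
    exists_representation_classEigenspace_eq_top (k := ℂ) hX hS not_isConj hc hqc
  obtain ⟨V, _, _, _, ρ, hρ, hV, T, hT⟩ := hG.exists_isIrreducible_over σ fun hdvd ↦
    hindex <| (((Fact.out : p.Prime).coprime_iff_not_dvd.mpr hE).pow_left _ |>.dvd_of_dvd_mul_right
      hdvd).trans (Subgroup.index_dvd_of_le le_sup_right)
  have hρω : classEigenspace (ρ.comp X.subtype) ω ≠ ⊥ :=
    classEigenspace_ne_bot_of_intertwiningMap hT
      (f := Subgroup.inclusion (le_sup_left : X ≤ X ⊔ S)) htop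
  obtain ⟨R, hSR, hR⟩ := exists_sylow_fixing hρ hV hρω hS fun s hs ↦
    hω s (le_sup_right (a := X) hs)
  obtain ⟨x, hx, rfl⟩ := hconj R hSR
  have hxω : x • ω = ω := hω x (le_sup_left (a := X) hx)
  have hqω : q • ω = ω := by
    have h := hR (x * q * x⁻¹) (mem_smul_sylow_iff.mpr (by simpa [mul_assoc] using hq))
    rwa [mul_smul, mul_smul, inv_smul_eq_iff.mpr hxω.symm, ← eq_inv_smul_iff,
      inv_smul_eq_iff.mpr hxω.symm] at h
  exact hωne (apply_conjNormal_of_smul_eq hqω ⟨c, hcX⟩).symm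

lemma OmitsSmallPParts.inf_centralizer_le_centralizer (hG : OmitsSmallPParts p a G)
    (hX : ¬ p ∣ Nat.card X) (hSP : S ≤ P) (hPS : P ≤ Subgroup.normalizer (S : Set G))
    (hindex : ¬ p ^ (a + 1) ∣ S.index) (hconj : ∀ R : Sylow p G, S ≤ R → ∃ x ∈ X, x • P = R) :
    X ⊓ Subgroup.centralizer (S : Set G) ≤ Subgroup.centralizer (P : Set G) := by
  refine inf_centralizer_le_centralizer_sylow hX hSP fun c ⟨hcX, hcS⟩ q hq ↦ ?_
  refine hG.exists_conj_eq_of_commute hX (P.isPGroup'.to_le hSP) hindex hconj hcX hcS hq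
    fun s hs ↦ ?_
  have h : Commute (q⁻¹ * s * q) c :=
    hcS _ (by simpa using (Subgroup.mem_normalizer_iff.mp (inv_mem (hPS hq)) s).mp hs)
  simpa [mul_assoc] using h.map (MulAut.conj q)

end CoprimeCentralizer

section NormalSeries

variable {p : ℕ} {G : Type*} [Group G]

/-- `M ≤ N` is one step of a normal series of `G` whose factor `N / M` is a `p`-group or a
`p'`-group, expressed elementwise as in `IsPSolvable`. -/
structure IsPStep (p : ℕ) (M N : Subgroup G) : Prop where
  normal_left : M.Normal
  normal_right : N.Normal
  le : M ≤ N
  factor : (∀ x ∈ N, ∃ k : ℕ, x ^ p ^ k ∈ M) ∨ (∀ x ∈ N, ∃ m : ℕ, Nat.Coprime m p ∧ x ^ m ∈ M)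

/-- `G` has a normal, and not just subnormal, series whose factors are `p`-groups or
`p'`-groups. -/
def HasPNormalSeries (p : ℕ) (G : Type*) [Group G] : Prop :=
  Relation.ReflTransGen (IsPStep (G := G) p) ⊥ ⊤

lemma IsPStep.map {M N : Subgroup G} (h : IsPStep p M N) {H : Type*} [Group H] {f : G →* H}
    (hf : Function.Surjective f) : IsPStep p (M.map f) (N.map f) where
  normal_left := h.normal_left.map f hf
  normal_right := h.normal_right.map f hf
  le := Subgroup.map_mono h.le
  factor := by
    refine h.factor.imp (fun hp ↦ ?_) fun hp' ↦ ?_ <;> rintro _ ⟨x, hx, rfl⟩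
    · exact (hp x hx).imp fun k hk ↦ ⟨_, hk, map_pow f x _⟩
    · exact (hp' x hx).imp fun m hm ↦ ⟨hm.1, _, hm.2, map_pow f x m⟩

lemma HasPNormalSeries.of_surjective (hG : HasPNormalSeries p G) {H : Type*} [Group H]
    {f : G →* H} (hf : Function.Surjective f) : HasPNormalSeries p H := by
  have h : Relation.ReflTransGen (IsPStep p) ((⊥ : Subgroup G).map f) ((⊤ : Subgroup G).map f) :=
    hG.lift (Subgroup.map f) fun _ _ hstep ↦ hstep.map hf
  rwa [Subgroup.map_bot, Subgroup.map_top_of_surjective f hf] at h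

lemma HasPNormalSeries.exists_ne_bot [Nontrivial G] (hG : HasPNormalSeries p G) :
    ∃ N : Subgroup G, IsPStep p ⊥ N ∧ N ≠ ⊥ := by
  by_contra! h
  suffices hbot : ∀ N : Subgroup G, Relation.ReflTransGen (IsPStep p) ⊥ N → N = ⊥ from
    bot_ne_top (hbot ⊤ hG).symm
  intro N hN
  induction hN with
  | refl => rfl
  | tail _ hstep ih => exact h _ (ih ▸ hstep)

lemma normal_closure_setOf_orderOf (R : Subgroup G) [R.Normal] (c : ℕ → Prop) :
    (Subgroup.closure {y | y ∈ R ∧ c (orderOf y)}).Normal := by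
  have h : Group.conjugatesOfSet {y | y ∈ R ∧ c (orderOf y)} = {y | y ∈ R ∧ c (orderOf y)} := by
    refine (Group.subset_conjugatesOfSet).antisymm' fun z hz ↦ ?_
    obtain ⟨y, ⟨hyR, hy⟩, hyz⟩ := Group.mem_conjugatesOfSet_iff.mp hz
    obtain ⟨g, rfl⟩ := isConj_iff.mp hyz
    exact ⟨‹R.Normal›.conj_mem y hyR g, ((MulAut.conj g).orderOf_eq y).symm ▸ hy⟩
  exact h ▸ Subgroup.normalClosure_normal

lemma closure_setOf_orderOf_le {R H : Subgroup G} {c d : ℕ → Prop}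
    (hcd : ∀ m n, c m → d n → n.Coprime m) (hRH : ∀ x ∈ R, ∃ n, d n ∧ x ^ n ∈ H) :
    Subgroup.closure {y | y ∈ R ∧ c (orderOf y)} ≤ H := by
  refine (Subgroup.closure_le _).mpr fun y ⟨hyR, hy⟩ ↦ ?_
  obtain ⟨n, hn, hyn⟩ := hRH y hyR
  obtain ⟨m, hm⟩ := exists_pow_eq_self_of_coprime (hcd _ _ hy hn)
  exact hm ▸ pow_mem hyn m

variable [Finite G]

lemma exists_pow_mem_closure_setOf_orderOf {R : Subgroup G} (c : ℕ → Prop) {x : G} (hx : x ∈ R)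
    {m n : ℕ} (hmn : orderOf x = n * m) (hm : c m) :
    x ^ n ∈ Subgroup.closure {y | y ∈ R ∧ c (orderOf y)} := by
  have hn : n ≠ 0 := left_ne_zero_of_mul (hmn ▸ (orderOf_pos x).ne')
  refine Subgroup.subset_closure ⟨pow_mem hx n, ?_⟩
  rwa [orderOf_pow_of_dvd hn ⟨m, hmn⟩, hmn, Nat.mul_div_cancel_left m hn.bot_lt]

-- `N` is `O^{p'}(R)` or `O^p(R)`, which lies in `H` but, unlike `H`, is normal in `G`.
lemma exists_isPStep_le [Fact p.Prime] {R H : Subgroup G} [hR : R.Normal]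
    (hRH : (∀ x ∈ R, ∃ k : ℕ, x ^ p ^ k ∈ H) ∨ (∀ x ∈ R, ∃ m : ℕ, m.Coprime p ∧ x ^ m ∈ H)) :
    ∃ N ≤ H, IsPStep p N R := by
  have exists_orderOf_eq (x : G) : ∃ k m, m.Coprime p ∧ orderOf x = p ^ k * m := by
    have hp : p.Prime := Fact.out
    obtain ⟨k, m, hm, hx⟩ := Nat.exists_eq_pow_mul_and_not_dvd (orderOf_pos x).ne' p hp.ne_one
    exact ⟨k, m, (hp.coprime_iff_not_dvd.mpr hm).symm, hx⟩
  have hle (c : ℕ → Prop) : Subgroup.closure {y | y ∈ R ∧ c (orderOf y)} ≤ R :=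
    (Subgroup.closure_le _).mpr fun _ ↦ And.left
  rcases hRH with h | h
  · refine ⟨Subgroup.closure {y | y ∈ R ∧ (orderOf y).Coprime p}, ?_,
      normal_closure_setOf_orderOf R (·.Coprime p), hR, hle (·.Coprime p), Or.inl fun x hx ↦ ?_⟩
    · refine closure_setOf_orderOf_le (c := (·.Coprime p)) (d := fun n ↦ ∃ k, n = p ^ k) ?_
        fun x hx ↦ (h x hx).elim fun k hk ↦ ⟨_, ⟨k, rfl⟩, hk⟩
      rintro m _ hm ⟨k, rfl⟩
      exact hm.symm.pow_left k
    · obtain ⟨k, m, hm, hkm⟩ := exists_orderOf_eq x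
      exact ⟨k, exists_pow_mem_closure_setOf_orderOf (·.Coprime p) hx hkm hm⟩
  · let c (n : ℕ) : Prop := ∃ k, n = p ^ k
    refine ⟨Subgroup.closure {y | y ∈ R ∧ c (orderOf y)}, closure_setOf_orderOf_le ?_ h,
      normal_closure_setOf_orderOf R c, hR, hle c, Or.inr fun x hx ↦ ?_⟩
    · rintro _ n ⟨k, rfl⟩ hn
      exact hn.pow_right k
    · obtain ⟨k, m, hm, hkm⟩ := exists_orderOf_eq x
      exact ⟨m, hm, exists_pow_mem_closure_setOf_orderOf c hx (hkm.trans (mul_comm _ _)) ⟨k, rfl⟩⟩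

lemma hasPNormalSeries_of_isPSolvable [Fact p.Prime] {G : Type} [Group G] [Finite G]
    (hG : IsPSolvable p G) : HasPNormalSeries p G := by
  obtain ⟨n, s, h0, hlast, hs⟩ := hG
  suffices h : ∀ i, ∀ R ≤ s i, R.Normal → Relation.ReflTransGen (IsPStep p) ⊥ R from
    h (Fin.last n) ⊤ hlast.ge inferInstance
  refine Fin.induction (fun R hR _ ↦ ?_) fun i ih R hR hRn ↦ ?_
  · rw [h0, le_bot_iff] at hR
    rw [hR]
  · obtain ⟨N, hN, hstep⟩ := exists_isPStep_le (R := R)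
      ((hs i).2.2.imp (fun h x hx ↦ h x (hR hx)) fun h x hx ↦ h x (hR hx))
    exact (ih N hN hstep.normal_left).tail hstep

end NormalSeries

section UniqueSylow

lemma isPGroup_map_mk' {p : ℕ} {G : Type*} [Group G] {M N : Subgroup G} [M.Normal]
    (h : ∀ x ∈ N, ∃ k : ℕ, x ^ p ^ k ∈ M) : IsPGroup p (N.map (QuotientGroup.mk' M)) := by
  rintro ⟨_, x, hx, rfl⟩
  obtain ⟨k, hk⟩ := h x hx
  exact ⟨k, Subtype.ext ((QuotientGroup.eq_one_iff _).mpr hk)⟩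

variable {p : ℕ} [Fact p.Prime]

lemma not_dvd_card_of_forall_pow_eq_one {G : Type*} [Group G] [Finite G]
    (h : ∀ x : G, ∃ m : ℕ, m.Coprime p ∧ x ^ m = 1) : ¬ p ∣ Nat.card G := by
  intro hdvd
  obtain ⟨x, hx⟩ := exists_prime_orderOf_dvd_card' p hdvd
  obtain ⟨m, hm, hxm⟩ := h x
  have hpm : p ∣ m := hx ▸ orderOf_dvd_of_pow_eq_one hxm
  exact (Fact.out : p.Prime).one_lt.ne' (hm.symm.eq_one_of_dvd hpm)

lemma not_dvd_card_map_mk' {G : Type*} [Group G] [Finite G] {M N : Subgroup G} [M.Normal]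
    (h : ∀ x ∈ N, ∃ m : ℕ, m.Coprime p ∧ x ^ m ∈ M) :
    ¬ p ∣ Nat.card (N.map (QuotientGroup.mk' M)) := by
  refine not_dvd_card_of_forall_pow_eq_one ?_
  rintro ⟨_, x, hx, rfl⟩
  obtain ⟨m, hm, hxm⟩ := h x hx
  exact ⟨m, hm, Subtype.ext ((QuotientGroup.eq_one_iff _).mpr hxm)⟩

lemma exists_smul_mapSurjective_eq {G H : Type*} [Group G] [Finite G] [Group H] {f : G →* H}
    (hf : Function.Surjective f) {P : Sylow p G} {S N : Subgroup G} (hS : IsPGroup p S)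
    (hconj : ∀ R : Sylow p G, S ≤ R → ∃ l ∈ N, l • P = R) (R : Sylow p H) (hSR : S.map f ≤ R) :
    ∃ x ∈ N.map f, x • P.mapSurjective hf = R := by
  have : Finite H := Finite.of_surjective f hf
  obtain ⟨Q, hSQ, hQR⟩ := exists_sylow_between hS (H := R.comap f)
    (Subgroup.map_le_iff_le_comap.mp hSR)
    (by rw [Subgroup.index_comap_of_surjective _ hf]; exact R.not_dvd_index)
  obtain ⟨l, hl, rfl⟩ := hconj Q hSQ
  refine ⟨f l, ⟨l, hl, rfl⟩, (Sylow.ext (Sylow.is_maximal' _ R.isPGroup' fun z hz ↦ ?_)).symm⟩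
  obtain ⟨q, hq, hqz⟩ := mem_smul_sylow_iff.mp hz
  have hlq : l * q * l⁻¹ ∈ l • P := mem_smul_sylow_iff.mpr (by simpa [mul_assoc] using hq)
  have hz : z = f (l * q * l⁻¹) := by
    rw [map_mul, map_mul, map_inv, hqz]
    group
  exact hz ▸ hQR hlq

lemma not_pow_dvd_index_of_relIndex_le {G : Type*} [Group G] [Finite G] {P : Sylow p G}
    {S : Subgroup G} {a : ℕ} (hSP : S ≤ P) (hS : S.relIndex P ≤ p ^ a) :
    ¬ p ^ (a + 1) ∣ S.index := by
  have hp : p.Prime := Fact.out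
  rw [← Subgroup.relIndex_mul_index hSP]
  intro hdvd
  have hdvd' : p ^ (a + 1) ∣ S.relIndex P :=
    ((hp.coprime_iff_not_dvd.mpr P.not_dvd_index).pow_left _).dvd_of_dvd_mul_right hdvd
  have hpos : 0 < S.relIndex P := Nat.pos_of_ne_zero Subgroup.index_ne_zero_of_finite
  exact (Nat.pow_lt_pow_right hp.one_lt a.lt_succ_self).not_ge ((Nat.le_of_dvd hpos hdvd').trans hS)

lemma le_sup_sylow_of_forall_pow_mem {G : Type*} [Group G] [Finite G] {M N : Subgroup G}
    [M.Normal] [N.Normal] (h : ∀ x ∈ N, ∃ k : ℕ, x ^ p ^ k ∈ M) (P : Sylow p G) : N ≤ M ⊔ P := by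
  have hπ := QuotientGroup.mk'_surjective M
  have : (N.map (QuotientGroup.mk' M)).Normal := ‹N.Normal›.map _ hπ
  have hle : N.map (QuotientGroup.mk' M) ≤ P.map (QuotientGroup.mk' M) :=
    IsPGroup.le_sylow_of_normal (isPGroup_map_mk' h) (P.mapSurjective hπ)
  rwa [Subgroup.map_le_map_iff, QuotientGroup.ker_mk', sup_comm] at hle

variable {a : ℕ} {G : Type} [Group G] [Finite G] {P R : Sylow p G} {S M N : Subgroup G}

lemma OmitsSmallPParts.le_sup_sylow_of_coprime (hG : OmitsSmallPParts p a G) [M.Normal] [N.Normal]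
    (hNM : ∀ x ∈ N, ∃ m : ℕ, m.Coprime p ∧ x ^ m ∈ M) (hSP : S ≤ P)
    (hS : S.relIndex P ≤ p ^ a) (hPS : P ≤ Subgroup.normalizer (S : Set G))
    (hconj : ∀ R : Sylow p G, S ≤ R → ∃ l ∈ N, l • P = R) {l : G} (hlN : l ∈ N)
    (hlS : l ∈ Subgroup.normalizer (S : Set G)) : (l • P : Sylow p G) ≤ M ⊔ P := by
  let π := QuotientGroup.mk' M
  have hπ : Function.Surjective π := QuotientGroup.mk'_surjective M
  have hX : ¬ p ∣ Nat.card (N.map π) := not_dvd_card_map_mk' hNM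
  have : (N.map π).Normal := ‹N.Normal›.map π hπ
  have hSp : IsPGroup p S := P.isPGroup'.to_le hSP
  have centralizer_le := (hG.of_surjective hπ).inf_centralizer_le_centralizer
    (P := P.mapSurjective hπ) hX (Subgroup.map_mono hSP)
    ((Subgroup.map_mono hPS).trans (Subgroup.le_normalizer_map π))
    (mt (·.trans (S.index_map_dvd hπ)) (not_pow_dvd_index_of_relIndex_le hSP hS))
    (exists_smul_mapSurjective_eq hπ hSp hconj)
  have hlX : π l ∈ N.map π := ⟨l, hlN, rfl⟩
  have hlC : π l ∈ Subgroup.centralizer (S.map π : Set (G ⧸ M)) := by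
    rintro _ ⟨s, hs, rfl⟩
    have hls : l⁻¹ * s * l ∈ S := by
      simpa using (Subgroup.mem_normalizer_iff.mp (inv_mem hlS) s).mp hs
    refine (commute_of_conj_mem_sylow (Q := P.mapSurjective hπ) hX hlX ⟨s, hSP hs, rfl⟩
      ⟨_, hSP hls, ?_⟩).symm
    simp only [map_mul, map_inv]
  have hlP := centralizer_le ⟨hlX, hlC⟩
  suffices h : (l • P : Sylow p G).map π ≤ P.map π by
    rwa [Subgroup.map_le_map_iff, QuotientGroup.ker_mk', sup_comm] at h
  rintro _ ⟨r, hr, rfl⟩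
  have hr' := mem_smul_sylow_iff.mp hr
  refine ⟨_, hr', ?_⟩
  have hcomm : π (l⁻¹ * r * l) * π l = π l * π (l⁻¹ * r * l) := hlP _ ⟨_, hr', rfl⟩
  rw [← map_mul π l, ← mul_assoc, ← mul_assoc, mul_inv_cancel, one_mul, map_mul π r] at hcomm
  exact mul_right_cancel hcomm

lemma OmitsSmallPParts.exists_smul_eq_of_isPStep (hG : OmitsSmallPParts p a G)
    (hstep : IsPStep p M N) (hSP : S ≤ P) (hS : S.relIndex P ≤ p ^ a)
    (hnorm : ∀ R : Sylow p G, S ≤ R → R ≤ Subgroup.normalizer (S : Set G))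
    (hconj : ∀ R : Sylow p G, S ≤ R → ∃ l ∈ N ⊓ Subgroup.normalizer (S : Set G), l • P = R)
    (hSR : S ≤ R) : ∃ l ∈ M ⊓ Subgroup.normalizer (S : Set G), l • P = R := by
  have := hstep.normal_left
  have := hstep.normal_right
  refine exists_mem_inf_smul_eq (hnorm P hSP) (hnorm R hSR) ?_
  obtain ⟨l, ⟨hlN, hlS⟩, rfl⟩ := hconj R hSR
  rcases hstep.factor with hp | hp'
  · intro r hr
    have hl : l ∈ M ⊔ P := le_sup_sylow_of_forall_pow_mem hp P hlN
    have hr' : l⁻¹ * r * l ∈ M ⊔ P := le_sup_right (a := M) (mem_smul_sylow_iff.mp hr)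
    simpa [mul_assoc] using mul_mem (mul_mem hl hr') (inv_mem hl)
  · exact hG.le_sup_sylow_of_coprime hp' hSP hS (hnorm P hSP)
      (fun R hR ↦ (hconj R hR).imp fun l hl ↦ ⟨hl.1.1, hl.2⟩) hlN hlS

lemma OmitsSmallPParts.sylow_eq_of_relIndex_le (hG : OmitsSmallPParts p a G)
    (hseries : HasPNormalSeries p G) (hP : NonlinearDegreesGE (p ^ a) P) (hSP : S ≤ P)
    (hS : S.relIndex P ≤ p ^ a) (hSR : S ≤ R) : R = P := by
  have relIndex_eq (Q : Sylow p G) (hSQ : S ≤ Q) : S.relIndex Q = S.relIndex P := by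
    refine Nat.eq_of_mul_eq_mul_left (Nat.card_pos (α := S)) ?_
    rw [← Subgroup.relIndex_bot_left, Subgroup.relIndex_mul_relIndex _ _ _ bot_le hSQ,
      Subgroup.relIndex_mul_relIndex _ _ _ bot_le hSP, Subgroup.relIndex_bot_left,
      Subgroup.relIndex_bot_left]
    exact Nat.card_congr (Q.equiv P).toEquiv
  have hnorm (Q : Sylow p G) (hSQ : S ≤ Q) : Q ≤ Subgroup.normalizer (S : Set G) :=
    le_normalizer_of_relIndex_le (hP.of_surjective (f := (P.equiv Q).toMonoidHom)
      (P.equiv Q).surjective) hSQ ((relIndex_eq Q hSQ).trans_le hS)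
  have hconj (M : Subgroup G) (hM : Relation.ReflTransGen (IsPStep p) M ⊤) :
      ∀ Q : Sylow p G, S ≤ Q → ∃ l ∈ M ⊓ Subgroup.normalizer (S : Set G), l • P = Q := by
    induction hM using Relation.ReflTransGen.head_induction_on with
    | refl =>
      exact fun Q hSQ ↦
        exists_mem_inf_smul_eq (hnorm P hSP) (hnorm Q hSQ) (by rw [top_sup_eq]; exact le_top)
    | head hstep _ ih => exact fun Q ↦ hG.exists_smul_eq_of_isPStep hstep hSP hS hnorm ih
  obtain ⟨l, ⟨hl, -⟩, rfl⟩ := hconj ⊥ hseries R hSR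
  rw [Subgroup.mem_bot.mp hl, one_smul]

end UniqueSylow

section LinearCharacters

variable {k G V : Type*} [Field k] [Group G] [AddCommGroup V] [Module k V]

lemma apply_eq_smul_of_mem_classEigenspace [IsMulCommutative G] [Finite G]
    [NeZero (Nat.card G : k)] {τ : Representation k G V} {ω : G → k} {v : V}
    (hv : v ∈ classEigenspace τ ω) (y : G) : τ y v = (ω y / Nat.card G) • v := by
  let _ := Fintype.ofFinite G
  have hconj (u : G) : u * y * u⁻¹ = y := by rw [mul_comm' u y, mul_inv_cancel_right]
  have h := mem_classEigenspace.mp hv y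
  simp only [classSum, hconj, Finset.sum_const, Finset.card_univ, ← Nat.card_eq_fintype_card,
    ← Nat.cast_smul_eq_nsmul k, LinearMap.smul_apply] at h
  rw [div_eq_inv_mul, mul_smul, ← h, inv_smul_smul₀ (NeZero.ne _)]

lemma pow_eq_one_of_apply_eq_smul_one [Nontrivial V] {ρ : Representation k G V} {y : G} {c : k}
    (hy : ρ y = c • 1) {n : ℕ} (hn : y ^ n = 1) : c ^ n = 1 := by
  have h : c ^ n • (1 : End k V) = (1 : k) • 1 :=
    calc c ^ n • (1 : End k V) = ρ y ^ n := by rw [hy, smul_pow, one_pow]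
      _ = (1 : k) • 1 := by rw [← map_pow, hn, map_one, one_smul]
  exact smul_left_injective k one_ne_zero h

-- The determinant of `σ` takes the value `c ^ finrank k V` at `y`, so a power of it will do.
lemma exists_monoidHom_apply_eq [FiniteDimensional k V] (σ : Representation k G V) {n : ℕ}
    (hn : n ≠ 0) (hV : (finrank k V).Coprime n) :
    ∃ δ : G →* kˣ, ∀ y c, σ y = c • 1 → c ^ n = 1 → (δ y : k) = c := by
  obtain ⟨e, -, he⟩ := Nat.exists_mul_mod_eq_of_coprime 1 hV hn
  refine ⟨(LinearMap.det.comp σ).toHomUnits ^ e, fun y c hy hc ↦ ?_⟩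
  have hdet : LinearMap.det (σ y) = c ^ finrank k V := by
    rw [hy, LinearMap.det_smul, map_one, mul_one]
  calc (((LinearMap.det.comp σ).toHomUnits ^ e) y : k) = LinearMap.det (σ y) ^ e := by simp
    _ = c := by rw [hdet, ← pow_mul, pow_eq_pow_mod _ hc, he, ← pow_eq_pow_mod _ hc, pow_one]

/-- The tensor product of `ρ` with the linear character `δ`, on the space of `ρ`. -/
def twist (δ : G →* kˣ) (ρ : Representation k G V) : Representation k G V where
  toFun g := (δ g : k) • ρ g
  map_one' := by simp
  map_mul' g h := by rw [map_mul, map_mul, Units.val_mul, smul_mul_smul_comm]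

lemma twist_apply (δ : G →* kˣ) (ρ : Representation k G V) (g : G) :
    twist δ ρ g = (δ g : k) • ρ g := rfl

lemma isIrreducible_twist (δ : G →* kˣ) {ρ : Representation k G V} (hρ : ρ.IsIrreducible) :
    (twist δ ρ).IsIrreducible :=
  isIrreducible_of_forall_le_comap hρ fun U hU g _ hv ↦
    (U.smul_mem_iff (δ g).ne_zero).mp (hU g hv)

lemma exists_isIrreducible_of_ker_le {H : Type*} [Group H] {f : G →* H}
    (hf : Function.Surjective f) {ρ : Representation k G V} (hρ : ρ.IsIrreducible)
    (hker : f.ker ≤ ρ.ker) : ∃ σ : Representation k H V, σ.IsIrreducible := by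
  let σ : Representation k H V := (QuotientGroup.lift f.ker ρ hker).comp
    (QuotientGroup.quotientKerEquivOfSurjective f hf).symm.toMonoidHom
  have hσ (g : G) : σ (f g) = ρ g :=
    congrArg (QuotientGroup.lift f.ker ρ hker)
      ((QuotientGroup.quotientKerEquivOfSurjective f hf).symm_apply_apply g)
  exact ⟨σ, isIrreducible_of_forall_le_comap hρ fun U hU g ↦ hσ g ▸ hU (f g)⟩

end LinearCharacters

section NormalAbelian

lemma relIndex_inf_stabilizer_le_finrank {k G E : Type*} [Field k] [Group G] [AddCommGroup E]
    [Module k E] [FiniteDimensional k E] {X J : Subgroup G} [X.Normal] [Finite X] (hX : X ≤ J)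
    {ψ : Representation k J E} (hψ : ψ.IsIrreducible) {ω : X → k}
    (hω : classEigenspace (ψ.comp (Subgroup.inclusion hX)) ω ≠ ⊥) :
    (J ⊓ MulAction.stabilizer G ω).relIndex J ≤ finrank k E := by
  have hstab : (J ⊓ MulAction.stabilizer G ω).subgroupOf J = MulAction.stabilizer J ω := by
    rw [Subgroup.inf_subgroupOf_left]
    rfl
  rw [Subgroup.relIndex, hstab, finrank_eq_index_stabilizer_mul_finrank hψ
    (iSupIndep_classEigenspace _)
    (fun j ω _ ↦ apply_mem_classEigenspace_inclusion_smul hX ψ j ω) hω]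
  exact Nat.le_mul_of_pos_right _ (finrank_pos_iff.mpr (Submodule.nontrivial_iff_ne_bot.mpr hω))

variable {p a : ℕ} [Fact p.Prime] {G E : Type} [Group G] [Finite G] {P : Sylow p G}
  {M : Subgroup G} [M.Normal] [AddCommGroup E] [Module ℂ E] [FiniteDimensional ℂ E]
  {ψ : Representation ℂ P E}

lemma OmitsSmallPParts.exists_representation_not_dvd_finrank (hG : OmitsSmallPParts p a G)
    (hseries : HasPNormalSeries p G) (hP : NonlinearDegreesGE (p ^ a) P) (hMP : M ≤ P)
    (hψ : ψ.IsIrreducible) (hE : finrank ℂ E = p ^ a) :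
    ∃ (W : Type) (_ : AddCommGroup W) (_ : Module ℂ W) (_ : FiniteDimensional ℂ W)
      (σ : Representation ℂ P W) (ω : M → ℂ), ¬ p ∣ finrank ℂ W ∧
      classEigenspace (σ.comp (Subgroup.inclusion hMP)) ω = ⊤ ∧
      classEigenspace (ψ.comp (Subgroup.inclusion hMP)) ω = ⊤ := by
  have hp : p.Prime := Fact.out
  have not_dvd : ¬ p ^ (a + 1) ∣ P.index * finrank ℂ E := fun h ↦ by
    have hdvd : p ^ (a + 1) ∣ p ^ a :=
      ((hp.coprime_iff_not_dvd.mpr P.not_dvd_index).pow_left _).dvd_of_dvd_mul_left (hE ▸ h)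
    exact absurd ((Nat.pow_dvd_pow_iff_le_right hp.one_lt).mp hdvd) (by lia)
  obtain ⟨V, _, _, _, ρ, hρ, hV, T, hT⟩ := hG.exists_isIrreducible_over ψ not_dvd
  obtain ⟨ω, hρω, hψω⟩ :=
    exists_classEigenspace_ne_bot_of_intertwiningMap hT (Subgroup.inclusion hMP)
  obtain ⟨R, hSR, hR⟩ := exists_sylow_fixing hρ hV hρω
    (P.isPGroup'.to_le (inf_le_left : (P : Subgroup G) ⊓ MulAction.stabilizer G ω ≤ P))
    fun _ hs ↦ hs.2
  obtain rfl := hG.sylow_eq_of_relIndex_le hseries hP inf_le_left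
    ((relIndex_inf_stabilizer_le_finrank hMP hψ hψω).trans_eq hE) hSR
  let U := classEigenspaceSubrep hMP (ρ.comp (R : Subgroup G).subtype) hR
  have htop : classEigenspaceSubrep hMP ψ hR = ⊤ := (hψ.eq_bot_or_eq_top _).resolve_left fun h ↦
    hψω congr(($h).toSubmodule)
  have hU : ¬ p ∣ finrank ℂ U.toSubmodule := fun h ↦ hV <| by
    rw [finrank_eq_index_stabilizer_mul_finrank hρ (iSupIndep_classEigenspace _)
      (fun g ω _ ↦ apply_mem_classEigenspace_smul ρ g ω) hρω]
    exact h.mul_left _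
  exact ⟨U.toSubmodule, inferInstance, inferInstance, inferInstance, U.toRepresentation, ω, hU,
    classEigenspace_classEigenspaceSubrep_eq_top hMP _ hR, congr(($htop).toSubmodule)⟩

lemma OmitsSmallPParts.exists_monoidHom_apply_eq_smul_one (hG : OmitsSmallPParts p a G)
    (hseries : HasPNormalSeries p G) (hP : NonlinearDegreesGE (p ^ a) P) [IsMulCommutative M]
    (hMP : M ≤ P) (hψ : ψ.IsIrreducible) (hE : finrank ℂ E = p ^ a) :
    ∃ δ : P →* ℂˣ, ∀ y : P, (y : G) ∈ M → ψ y = (δ y : ℂ) • 1 := by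
  have hp : p.Prime := Fact.out
  obtain ⟨W, _, _, _, σ, ω, hW, hσω, hψω⟩ :=
    hG.exists_representation_not_dvd_finrank hseries hP hMP hψ hE
  have : Nontrivial E := finrank_pos_iff.mp (hE ▸ pow_pos hp.pos a)
  have : NeZero (Nat.card M : ℂ) := ⟨Nat.cast_ne_zero.mpr Nat.card_pos.ne'⟩
  obtain ⟨m, hm⟩ := IsPGroup.iff_card.mp (P.isPGroup'.to_le hMP)
  have hcoprime : (finrank ℂ W).Coprime (Nat.card M) :=
    hm ▸ (hp.coprime_iff_not_dvd.mpr hW).symm.pow_right m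
  obtain ⟨δ, hδ⟩ := exists_monoidHom_apply_eq σ Nat.card_pos.ne' hcoprime
  refine ⟨δ, fun y hy ↦ ?_⟩
  have hσy : σ y = (ω ⟨y, hy⟩ / Nat.card M) • 1 := LinearMap.ext fun w ↦
    apply_eq_smul_of_mem_classEigenspace (τ := σ.comp (Subgroup.inclusion hMP))
      (hσω ▸ Submodule.mem_top) ⟨y, hy⟩
  have hψy : ψ y = (ω ⟨y, hy⟩ / Nat.card M) • 1 := LinearMap.ext fun v ↦
    apply_eq_smul_of_mem_classEigenspace (τ := ψ.comp (Subgroup.inclusion hMP))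
      (hψω ▸ Submodule.mem_top) ⟨y, hy⟩
  have hyM : y ^ Nat.card M = 1 :=
    Subtype.ext (congrArg (Subtype.val : M → G) (pow_card_eq_one' (x := (⟨y, hy⟩ : M))))
  rw [hδ y _ hσy (pow_eq_one_of_apply_eq_smul_one hψy hyM), hψy]

end NormalAbelian

section Induction

variable {p a : ℕ} [Fact p.Prime]

lemma exists_isIrreducible_mapSurjective {G H E : Type*} [Group G] [Finite G] [Group H]
    {k : Type*} [Field k] [AddCommGroup E] [Module k E] {P : Sylow p G} {ψ : Representation k P E}
    (hψ : ψ.IsIrreducible) {f : G →* H} (hf : Function.Surjective f)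
    (hker : ∀ y : P, f y = 1 → ψ y = 1) :
    ∃ ψ' : Representation k (P.mapSurjective hf) E, ψ'.IsIrreducible :=
  exists_isIrreducible_of_ker_le (f.subgroupMap_surjective P) hψ fun y hy ↦
    hker y congr(($hy : H))

lemma HasPNormalSeries.exists_normal_ne_bot {G : Type*} [Group G] [Finite G] [Nontrivial G]
    (hG : HasPNormalSeries p G) : ∃ N : Subgroup G, N.Normal ∧ N ≠ ⊥ ∧
      (¬ p ∣ Nat.card N ∨ IsPGroup p N ∧ IsMulCommutative N) := by
  obtain ⟨N, ⟨-, hN, -, hfactor⟩, hne⟩ := hG.exists_ne_bot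
  rcases hfactor with hp | hp'
  · have hNp : IsPGroup p N := fun x ↦ (hp x x.2).imp fun _ hk ↦ Subtype.ext hk
    have : Nontrivial N := N.nontrivial_iff_ne_bot.mpr hne
    have hcenter := hNp.center_nontrivial
    refine ⟨(Subgroup.center N).map N.subtype, ConjAct.normal_of_characteristic_of_normal, ?_,
      .inr ⟨hNp.to_le (Subgroup.map_subtype_le _), inferInstance⟩⟩
    rwa [ne_eq, Subgroup.map_eq_bot_iff_of_injective _ N.subtype_injective, ← ne_eq,
      ← Subgroup.nontrivial_iff_ne_bot]
  · exact ⟨N, hN, hne, .inl <| not_dvd_card_of_forall_pow_eq_one fun x ↦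
      (hp' x x.2).imp fun _ hm ↦ ⟨hm.1, Subtype.ext hm.2⟩⟩

theorem OmitsSmallPParts.finrank_ne {G E : Type} [Group G] [Finite G]
    [AddCommGroup E] [Module ℂ E] [FiniteDimensional ℂ E] {P : Sylow p G}
    {ψ : Representation ℂ P E} (hG : OmitsSmallPParts p a G) (hseries : HasPNormalSeries p G)
    (hP : NonlinearDegreesGE (p ^ a) P) (ha : p ^ a ≠ 1) (hψ : ψ.IsIrreducible) :
    finrank ℂ E ≠ p ^ a := by
  intro hE
  induction hcard : Nat.card G using Nat.strong_induction_on generalizing G with | _ n ih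
  subst hcard
  have quotient_step (N : Subgroup G) [N.Normal] (hN : N ≠ ⊥) (φ : Representation ℂ P E)
      (hφ : φ.IsIrreducible) (htriv : ∀ y : P, (y : G) ∈ N → φ y = 1) : False := by
    have hπ := QuotientGroup.mk'_surjective N
    obtain ⟨φ', hφ'⟩ := exists_isIrreducible_mapSurjective hφ hπ fun y hy ↦
      htriv y ((QuotientGroup.eq_one_iff _).mp hy)
    refine ih _ ?_ (hG.of_surjective hπ) (hseries.of_surjective hπ)
      (hP.of_surjective (((QuotientGroup.mk' N).subgroupMap_surjective P))) hφ' rfl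
    rw [Subgroup.card_eq_card_quotient_mul_card_subgroup N]
    exact lt_mul_of_one_lt_right Nat.card_pos (N.one_lt_card_iff_ne_bot.mpr hN)
  have : Nontrivial G := by
    by_contra htrivial
    have := not_nontrivial_iff_subsingleton.mp htrivial
    exact ha (hE ▸ IsIrreducible.finrank_eq_one_of_isMulCommutative ψ)
  obtain ⟨N, hN, hne, hp' | ⟨hNp, hcomm⟩⟩ := hseries.exists_normal_ne_bot
  · refine quotient_step N hne ψ hψ fun y hy ↦ ?_
    have hy1 : (y : G) = 1 :=
      Subgroup.disjoint_def.mp (disjoint_of_not_dvd_card hp' P.isPGroup') hy y.2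
    obtain rfl : y = 1 := Subtype.ext hy1
    exact map_one ψ
  · obtain ⟨δ, hδ⟩ :=
      hG.exists_monoidHom_apply_eq_smul_one hseries hP (hNp.le_sylow_of_normal P) hψ hE
    refine quotient_step N hne (twist δ⁻¹ ψ) (isIrreducible_twist δ⁻¹ hψ) fun y hy ↦ ?_
    rw [twist_apply, hδ y hy, smul_smul, MonoidHom.inv_apply, Units.inv_mul, one_smul]

end Induction

section EndomorphismRing

variable {k G V : Type*} [Field k] [Group G] [Finite G] [NeZero (Nat.card G : k)]
  [AddCommGroup V] [Module k V] {ρ : Representation k G V}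

lemma exists_intertwiningMap_projection (U : Subrepresentation ρ) :
    ∃ π : IntertwiningMap ρ ρ, (∀ u ∈ U, π u = u) ∧ ∀ v, π v ∈ U := by
  obtain ⟨C, hUC⟩ := exists_isCompl U
  have hcompl : IsCompl U.toSubmodule C.toSubmodule :=
    ⟨disjoint_iff.mpr congr(($hUC.inf_eq_bot).toSubmodule),
      codisjoint_iff.mpr congr(($hUC.sup_eq_top).toSubmodule)⟩
  let proj := U.toSubmodule.projection C.toSubmodule hcompl
  have proj_of_mem {u : V} (hu : u ∈ U.toSubmodule) : proj u = u :=
    Submodule.projection_apply_of_mem_left hcompl hu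
  have proj_eq_zero {u : V} (hu : u ∈ C.toSubmodule) : proj u = 0 :=
    (Submodule.projection_apply_eq_zero_iff hcompl).mpr hu
  refine ⟨⟨proj, fun g ↦ LinearMap.ext fun v ↦ ?_⟩, fun u hu ↦ proj_of_mem hu,
    Submodule.projection_apply_mem hcompl⟩
  obtain ⟨u, hu, c, hc, rfl⟩ := Submodule.mem_sup.mp
    (hcompl.sup_eq_top ▸ Submodule.mem_top : v ∈ U.toSubmodule ⊔ C.toSubmodule)
  simp only [LinearMap.comp_apply, map_add, proj_of_mem hu, proj_eq_zero hc, map_zero,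
    proj_of_mem (U.apply_mem_toSubmodule g hu), proj_eq_zero (C.apply_mem_toSubmodule g hc)]

lemma isIrreducible_of_finrank_intertwiningMap_self_eq_one
    (hρ : finrank k (IntertwiningMap ρ ρ) = 1) : ρ.IsIrreducible := by
  have id_ne_zero : IntertwiningMap.id ρ ≠ 0 := fun h0 ↦ by
    have : Subsingleton (IntertwiningMap ρ ρ) := by
      refine subsingleton_of_forall_eq 0 fun T ↦ IntertwiningMap.ext (LinearMap.ext fun v ↦ ?_)
      exact congr(T ($h0 v)).trans (map_zero T)
    rw [finrank_zero_of_subsingleton] at hρ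
    exact zero_ne_one hρ
  have : Nontrivial (Subrepresentation ρ) := ⟨⊥, ⊤, fun h ↦ id_ne_zero <|
    IntertwiningMap.ext <| LinearMap.ext fun v ↦
      (h ▸ Submodule.mem_top : v ∈ (⊥ : Subrepresentation ρ).toSubmodule)⟩
  refine ⟨fun U ↦ ?_⟩
  obtain ⟨π, π_of_mem, π_mem⟩ := exists_intertwiningMap_projection U
  obtain ⟨c, rfl⟩ := (finrank_eq_one_iff_of_nonzero' _ id_ne_zero).mp hρ π
  rcases eq_or_ne c 0 with rfl | hc
  · refine .inl (Subrepresentation.toSubmodule_injective ?_)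
    exact (Submodule.eq_bot_iff _).mpr fun u hu ↦ (π_of_mem u hu).symm.trans (zero_smul k u)
  · refine .inr (Subrepresentation.toSubmodule_injective ?_)
    exact Submodule.eq_top_iff'.mpr fun v ↦ (Submodule.smul_mem_iff _ hc).mp (π_mem v)

end EndomorphismRing

section Characters

lemma simple_iff_isIrreducible {G : Type} [Group G] [Finite G] (V : FDRep ℂ G) :
    CategoryTheory.Simple V ↔ IsIrreducible V.ρ := by
  have finrank_end : finrank ℂ (V ⟶ V) = finrank ℂ (IntertwiningMap V.ρ V.ρ) :=
    ((FDRep.forget₂HomLinearEquiv V V).symm.trans (Rep.homLinearEquiv _ _)).finrank_eq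
  rw [FDRep.simple_iff_end_is_rank_one, finrank_end]
  exact ⟨isIrreducible_of_finrank_intertwiningMap_self_eq_one,
    fun _ ↦ IsIrreducible.finrank_intertwiningMap_self V.ρ⟩

lemma charDeg_character {G : Type} [Group G] (V : FDRep ℂ G) :
    charDeg (FDRep.character V) = finrank ℂ V := by
  rw [charDeg, FDRep.char_one, Complex.natCast_re, Nat.floor_natCast]

lemma exists_isIrrChar_charDeg_eq {G V : Type} [Group G] [Finite G] [AddCommGroup V] [Module ℂ V]
    [FiniteDimensional ℂ V] {ρ : Representation ℂ G V} (hρ : ρ.IsIrreducible) :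
    ∃ χ : G → ℂ, IsIrrChar χ ∧ charDeg χ = finrank ℂ V :=
  ⟨(FDRep.of ρ).character, ⟨FDRep.of ρ, (simple_iff_isIrreducible _).mpr hρ, rfl⟩,
    charDeg_character (FDRep.of ρ)⟩

lemma finrank_pos_of_isIrreducible {k G V : Type*} [Field k] [Group G] [AddCommGroup V]
    [Module k V] [FiniteDimensional k V] {ρ : Representation k G V} (hρ : ρ.IsIrreducible) :
    0 < finrank k V := by
  have := hρ.toNontrivial
  refine finrank_pos_iff.mpr (not_subsingleton_iff_nontrivial.mp fun _ ↦ ?_)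
  exact bot_ne_top (α := Subrepresentation ρ) <|
    Subrepresentation.toSubmodule_injective (Subsingleton.elim _ _)

lemma nonlinearDegreesGE_of_forall_isIrrChar {n : ℕ} {P : Type} [Group P] [Finite P]
    (hP : ∀ χ : P → ℂ, IsIrrChar χ → 1 < charDeg χ → n ≤ charDeg χ) :
    NonlinearDegreesGE n P := by
  intro V _ _ _ ρ hρ
  obtain ⟨χ, hχ, hdeg⟩ := exists_isIrrChar_charDeg_eq hρ
  rw [← hdeg]
  refine (Nat.succ_le_iff.mpr ?_).eq_or_lt'.imp_right (hP χ hχ)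
  exact hdeg ▸ finrank_pos_of_isIrreducible hρ

lemma omitsSmallPParts_of_forall_isIrrChar {p a : ℕ} (hp : p.Prime) {G : Type} [Group G] [Finite G]
    (hG : ∀ χ : G → ℂ, IsIrrChar χ → pPart p (charDeg χ) ≠ 1 → p ^ a < pPart p (charDeg χ)) :
    OmitsSmallPParts p a G := by
  intro V _ _ _ ρ hρ hdvd
  obtain ⟨χ, hχ, hdeg⟩ := exists_isIrrChar_charDeg_eq hρ
  have hne := (finrank_pos_of_isIrreducible hρ).ne'
  rw [← hdeg] at hdvd hne ⊢
  have one_lt_pPart : 1 < pPart p (charDeg χ) :=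
    Nat.one_lt_pow (hp.factorization_pos_of_dvd hne hdvd).ne' hp.one_lt
  have lt_factorization : a < (charDeg χ).factorization p :=
    (Nat.pow_lt_pow_iff_right hp.one_lt).mp (hG χ hχ one_lt_pPart.ne')
  exact (hp.pow_dvd_iff_le_factorization hne).mpr lt_factorization

end Characters

theorem stmt_6_general {G : Type} [Group G] [Finite G] (p : ℕ) (hp : p.Prime)
    (hsolv : IsPSolvable p G) (P : Sylow p G) (a : ℕ)
    (hm : IsLeast {d : ℕ | 1 < d ∧ ∃ χ : ↥P.toSubgroup → ℂ, IsIrrChar χ ∧ charDeg χ = d}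
      (p ^ a)) :
    ∃ χ : G → ℂ, IsIrrChar χ ∧ pPart p (charDeg χ) ≠ 1 ∧ pPart p (charDeg χ) ≤ p ^ a := by
  have : Fact p.Prime := ⟨hp⟩
  obtain ⟨⟨one_lt, _, ⟨E, hE, rfl⟩, hdeg⟩, minimal⟩ := hm
  have hP : NonlinearDegreesGE (p ^ a) P :=
    nonlinearDegreesGE_of_forall_isIrrChar fun χ hχ hlt ↦ minimal ⟨hlt, χ, hχ, rfl⟩
  by_contra! hcon
  have hG : OmitsSmallPParts p a G := omitsSmallPParts_of_forall_isIrrChar hp hcon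
  rw [charDeg_character] at hdeg
  exact hG.finrank_ne (hasPNormalSeries_of_isPSolvable hsolv) hP one_lt.ne'
    ((simple_iff_isIrreducible E).mp hE) hdeg

/-- Theorem 3.1: if `G` is `p`-solvable with `O_{p'}(G) = 1` and non-abelian Sylow
`p`-subgroup `P` with `m(P) = p^a`, then there is `χ ∈ Irr G` with `1 ≠ χ(1)_p ≤ p^a`. -/
theorem stmt_6 {G : Type} [Group G] [Fintype G] (p : ℕ) (hp : p.Prime)
    (hsolv : IsPSolvable p G)
    (hOp' : ∀ N : Subgroup G, N.Normal → ¬ p ∣ Nat.card N → N = ⊥)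
    (P : Sylow p G) (hnab : ¬ ∀ a b : ↥P.toSubgroup, a * b = b * a)
    (a : ℕ)
    (hm : IsLeast {d : ℕ | 1 < d ∧ ∃ χ : ↥P.toSubgroup → ℂ, IsIrrChar χ ∧ charDeg χ = d}
      (p ^ a)) :
    ∃ χ : G → ℂ, IsIrrChar χ ∧ pPart p (charDeg χ) ≠ 1 ∧ pPart p (charDeg χ) ≤ p ^ a :=
  stmt_6_general p hp hsolv P a hm
end
end

section
/- Let P be a finite p-group acting by automorphisms on a finite group G, let N ⊴ G be P-invariant with G/N of order prime to p, and let C/N = C_{G/N}(P). For χ ∈ Irr_P(G) with Glauberman–Isaacs-type correspondent χ* ∈ Irr_P(C) satisfying χ|_C = e·χ* + pΔ + Ξ (with p ∤ e, Δ, Ξ characters of C or zero, and no constituent of Ξ lying over a P-invariant character of N), the multiplicity [χ|_C, χ*] is not divisible by p. -/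
open scoped BigOperators Classical

noncomputable section

/-- `f` is a character of `H` or zero: a nonnegative integer combination of irreducible
characters. -/
def IsCharOrZero {H : Type} [Group H] (f : H → ℂ) : Prop :=
  ∃ (k : ℕ) (c : Fin k → ℕ) (χs : Fin k → (H → ℂ)),
    (∀ i, IsIrrChar (χs i)) ∧ f = fun h => ∑ i, (c i : ℂ) * χs i h

/-!
Let `θ` be an irreducible constituent of `χ*|_N`. For every class function `f` on `N` invariant
under conjugation by `C`, the element `∑ n, conj (f n) n` of `ℂ[N]` acts by the same scalar on `θ`
and on `χ*`. Comparing traces gives `[χ*|_N, f] θ(1) = [θ, f] χ*(1)`, and taking for `f` the sum of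
the `C`-conjugates of another constituent yields Clifford's theorem. Hence the number of
constituents of `χ*|_N` divides `|C : N|` and is prime to `p`, so the `p`-group `P`, which permutes
them, fixes one of them. Thus `χ*` lies over a `P`-invariant character of `N`, it is not a
constituent of `Ξ`, and `[χ|_C, χ*] = e + p [Δ, χ*]`.
-/

section UnitaryTrick

open scoped ComplexOrder Matrix

variable {𝕜 G n : Type*} [RCLike 𝕜] [Group G] [Finite G] [Fintype n] [DecidableEq n]

lemma exists_posDef_forall_conjTranspose_mul_mul_eq (M : G →* Matrix n n 𝕜) :
    ∃ H : Matrix n n 𝕜, H.PosDef ∧ ∀ g, (M g)ᴴ * H * M g = H := by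
  have := Fintype.ofFinite G
  refine ⟨∑ x, (M x)ᴴ * M x, ?_, fun g => ?_⟩
  · rw [← Finset.add_sum_erase _ _ (Finset.mem_univ (1 : G))]
    refine Matrix.PosDef.add_posSemidef (by simpa using Matrix.PosDef.one)
      (Matrix.posSemidef_sum _ fun x _ => Matrix.posSemidef_conjTranspose_mul_self _)
  · rw [Finset.mul_sum, Finset.sum_mul,
      ← Equiv.sum_comp (Equiv.mulRight g) fun x => (M x)ᴴ * M x]
    simp only [Equiv.coe_mulRight, map_mul, Matrix.conjTranspose_mul, Matrix.mul_assoc]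

lemma trace_map_inv_eq_star (M : G →* Matrix n n 𝕜) (g : G) :
    (M g⁻¹).trace = star (M g).trace := by
  obtain ⟨H, hH, hinv⟩ := exists_posDef_forall_conjTranspose_mul_mul_eq M
  have hdet : IsUnit H.det := (Matrix.isUnit_iff_isUnit_det _).1 hH.isUnit
  have hcancel : M g * M g⁻¹ = 1 := by rw [← map_mul, mul_inv_cancel, map_one]
  have hsimilar : (M g)ᴴ * H = H * M g⁻¹ := by
    rw [← hinv g, Matrix.mul_assoc _ (M g), hcancel, Matrix.mul_one, hinv g]
  calc (M g⁻¹).trace = (H⁻¹ * (H * M g⁻¹)).trace := by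
        rw [Matrix.nonsing_inv_mul_cancel_left _ _ hdet]
    _ = ((M g)ᴴ).trace := by
        rw [← hsimilar, Matrix.trace_mul_comm, Matrix.mul_nonsing_inv_cancel_right _ _ hdet]
    _ = star (M g).trace := Matrix.trace_conjTranspose _

lemma character_inv_eq_star {V : Type*} [AddCommGroup V] [Module 𝕜 V] [FiniteDimensional 𝕜 V]
    (ρ : Representation 𝕜 G V) (g : G) : ρ.character g⁻¹ = star (ρ.character g) := by
  let b := Module.finBasis 𝕜 V
  let M : G →* Matrix _ _ 𝕜 := (LinearMap.toMatrixAlgEquiv b).toAlgHom.toMonoidHom.comp ρ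
  have htrace (x : G) : ρ.character x = (M x).trace := LinearMap.trace_eq_matrix_trace 𝕜 b (ρ x)
  rw [htrace, htrace, trace_map_inv_eq_star]

end UnitaryTrick

section CharInner

variable {G H : Type} [Group G] [Fintype G] [Group H] [Fintype H]

lemma charInner_add_left (α β η : G → ℂ) :
    charInner G (fun g => α g + β g) η = charInner G α η + charInner G β η := by
  simp only [charInner, add_mul, Finset.sum_add_distrib, mul_add]

lemma charInner_const_mul_left (c : ℂ) (α η : G → ℂ) :
    charInner G (fun g => c * α g) η = c * charInner G α η := by
  simp only [charInner, mul_assoc, ← Finset.mul_sum]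
  exact mul_left_comm _ _ _

lemma charInner_sum_left {ι : Type*} [Fintype ι] (α : ι → G → ℂ) (η : G → ℂ) :
    charInner G (fun g => ∑ i, α i g) η = ∑ i, charInner G (α i) η := by
  simp only [charInner, Finset.sum_mul, Finset.mul_sum]
  exact Finset.sum_comm

lemma charInner_sum_right {ι : Type*} [Fintype ι] (α : G → ℂ) (η : ι → G → ℂ) :
    charInner G α (fun g => ∑ i, η i g) = ∑ i, charInner G α (η i) := by
  simp only [charInner, map_sum, Finset.mul_sum]
  exact Finset.sum_comm

lemma charInner_comp_mulEquiv (e : G ≃* H) (α β : H → ℂ) :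
    charInner G (α ∘ e) (β ∘ e) = charInner H α β := by
  simp only [charInner, Nat.card_congr e.toEquiv]
  congr 1
  exact Equiv.sum_comp e.toEquiv fun h => α h * (starRingEnd ℂ) (β h)

variable {V W : Type*} [AddCommGroup V] [Module ℂ V] [FiniteDimensional ℂ V] [AddCommGroup W]
  [Module ℂ W] [FiniteDimensional ℂ W]

lemma charInner_character_eq_finrank (ρ : Representation ℂ G V) (σ : Representation ℂ G W) :
    charInner G ρ.character σ.character =
      Module.finrank ℂ (Representation.IntertwiningMap σ ρ) := by
  have : Invertible (Nat.card G : ℂ) := invertibleOfNonzero (NeZero.ne _)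
  rw [← Representation.card_inv_mul_sum_char_mul_char_eq_finrank]
  simp only [charInner, character_inv_eq_star, starRingEnd_apply]

end CharInner

section Irreducible

variable {G : Type} [Group G]

lemma charInner_fdRep_character [Fintype G] (V W : FDRep ℂ G) :
    charInner G V.character W.character =
      (Nat.card G : ℂ)⁻¹ * ∑ g, V.character g * W.character g⁻¹ := by
  have hinv (g : G) : W.character g⁻¹ = (starRingEnd ℂ) (W.character g) :=
    character_inv_eq_star W.ρ g
  simp only [charInner, hinv]

lemma isIrrChar_character_iff_charInner_self [Fintype G] {V : Type} [AddCommGroup V] [Module ℂ V]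
    [FiniteDimensional ℂ V] (ρ : Representation ℂ G V) :
    IsIrrChar ρ.character ↔ charInner G ρ.character ρ.character = 1 := by
  have hnorm (W : FDRep ℂ G) :
      CategoryTheory.Simple W ↔ charInner G W.character W.character = 1 := by
    rw [FDRep.simple_iff_char_is_norm_one, charInner_fdRep_character,
      inv_mul_eq_one₀ (NeZero.ne (Nat.card G : ℂ)), eq_comm]
  constructor
  · rintro ⟨W, hW, hchar⟩
    rw [← hchar]
    exact (hnorm W).1 hW
  · exact fun h => ⟨FDRep.of ρ, (hnorm _).2 h, rfl⟩

namespace IsIrrChar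

variable {χ η : G → ℂ}

lemma exists_character_eq (hχ : IsIrrChar χ) :
    ∃ (V : Type) (_ : AddCommGroup V) (_ : Module ℂ V) (_ : FiniteDimensional ℂ V)
      (ρ : Representation ℂ G V), ρ.character = χ :=
  let ⟨V, _, hV⟩ := hχ
  ⟨V, inferInstance, inferInstance, inferInstance, V.ρ, hV⟩

lemma apply_conj (hχ : IsIrrChar χ) (x g : G) : χ (x * g * x⁻¹) = χ g := by
  obtain ⟨V, _, _, _, ρ, rfl⟩ := hχ.exists_character_eq
  exact ρ.char_conj g x

lemma charInner_self [Fintype G] (hχ : IsIrrChar χ) : charInner G χ χ = 1 := by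
  obtain ⟨V, _, _, _, ρ, rfl⟩ := hχ.exists_character_eq
  exact (isIrrChar_character_iff_charInner_self _).1 hχ

lemma charInner_eq_zero_of_ne [Fintype G] (hχ : IsIrrChar χ) (hη : IsIrrChar η) (hne : χ ≠ η) :
    charInner G χ η = 0 := by
  have : Invertible (Nat.card G : ℂ) := invertibleOfNonzero (NeZero.ne _)
  obtain ⟨V, _, rfl⟩ := hχ
  obtain ⟨W, _, rfl⟩ := hη
  rw [charInner_fdRep_character, FDRep.char_orthonormal V W,
    if_neg fun ⟨i⟩ => hne (FDRep.char_iso i)]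

lemma finrank_intertwiningMap_self [Finite G] {V : Type*} [AddCommGroup V] [Module ℂ V]
    [FiniteDimensional ℂ V] {ρ : Representation ℂ G V} (hρ : IsIrrChar ρ.character) :
    Module.finrank ℂ (Representation.IntertwiningMap ρ ρ) = 1 := by
  have := Fintype.ofFinite G
  exact_mod_cast (charInner_character_eq_finrank ρ ρ).symm.trans hρ.charInner_self

lemma apply_one_ne_zero [Finite G] (hχ : IsIrrChar χ) : χ 1 ≠ 0 := by
  obtain ⟨V, _, _, _, ρ, rfl⟩ := hχ.exists_character_eq
  intro hdeg
  rw [Representation.char_one, Nat.cast_eq_zero, Module.finrank_zero_iff] at hdeg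
  have : Subsingleton (Representation.IntertwiningMap ρ ρ) :=
    DFunLike.coe_injective.subsingleton
  exact zero_ne_one (Module.finrank_zero_of_subsingleton.symm.trans
    hχ.finrank_intertwiningMap_self)

lemma comp_mulEquiv {H : Type} [Group H] [Finite H] (hχ : IsIrrChar χ) (e : H ≃* G) :
    IsIrrChar (χ ∘ e) := by
  have := Fintype.ofFinite H
  have := Fintype.ofEquiv H e.toEquiv
  obtain ⟨V, _, _, _, ρ, rfl⟩ := hχ.exists_character_eq
  let σ : Representation ℂ H V := ρ.comp e.toMonoidHom
  have hσ : σ.character = ρ.character ∘ e := rfl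
  rw [← hσ, isIrrChar_character_iff_charInner_self, hσ, charInner_comp_mulEquiv, hχ.charInner_self]

end IsIrrChar

lemma IsCharOrZero.exists_charInner_eq_natCast [Fintype G] {f η : G → ℂ} (hf : IsCharOrZero f)
    (hη : IsIrrChar η) : ∃ m : ℕ, charInner G f η = m := by
  obtain ⟨k, c, χs, hχs, rfl⟩ := hf
  have hmult (i : Fin k) : charInner G (χs i) η = ((if χs i = η then 1 else 0 : ℕ) : ℂ) := by
    split_ifs with h
    · rw [h, hη.charInner_self, Nat.cast_one]
    · rw [(hχs i).charInner_eq_zero_of_ne hη h, Nat.cast_zero]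
  refine ⟨∑ i, c i * if χs i = η then 1 else 0, ?_⟩
  simp only [charInner_sum_left, charInner_const_mul_left, hmult, Nat.cast_sum, Nat.cast_mul]

end Irreducible

section Constituents

/-- The irreducible constituents of a class function `ψ`. -/
def irrConstituents {G : Type} [Group G] [Fintype G] (ψ : G → ℂ) : Set (G → ℂ) :=
  {θ | IsIrrChar θ ∧ charInner G ψ θ ≠ 0}

section Existence

variable {k G V : Type*} [Field k] [Monoid G] [AddCommGroup V] [Module k V]

/-- The inclusion of a subrepresentation, as an intertwining map. -/
def subrepresentationInclusion {ρ : Representation k G V} (R : Subrepresentation ρ) :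
    Representation.IntertwiningMap R.toRepresentation ρ :=
  ⟨R.toSubmodule.subtype, fun _ => rfl⟩

lemma isIrreducible_toRepresentation_of_isAtom {ρ : Representation k G V}
    {R : Subrepresentation ρ} (hR : IsAtom R) : R.toRepresentation.IsIrreducible := by
  let f := Representation.IntertwiningMap.equivLinearMapAsModule _ _
    (subrepresentationInclusion R)
  have hf : Function.Injective f := Subtype.val_injective
  have hrange : LinearMap.range f = R.asSubmodule := SetLike.coe_injective Subtype.range_val
  have hsimple : IsSimpleModule (MonoidAlgebra k G) (LinearMap.range f) := by
    rw [hrange, isSimpleModule_iff_isAtom]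
    exact (OrderIso.isAtom_iff Subrepresentation.subrepresentationSubmoduleOrderIso R).2 hR
  rw [Representation.irreducible_iff_isSimpleModule_asModule]
  exact IsSimpleModule.congr (LinearEquiv.ofInjective f hf)

end Existence

variable {G : Type} [Group G] [Fintype G]

lemma comp_mulEquiv_mem_irrConstituents {H : Type} [Group H] [Fintype H] {ψ θ : G → ℂ}
    (hθ : θ ∈ irrConstituents ψ) (e : H ≃* G) : θ ∘ e ∈ irrConstituents (ψ ∘ e) :=
  ⟨hθ.1.comp_mulEquiv e, by rw [charInner_comp_mulEquiv]; exact hθ.2⟩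

lemma comp_mulAut_mem_irrConstituents {ψ θ : G → ℂ} {α : MulAut G} (hψ : ∀ g, ψ (α g) = ψ g)
    (hθ : θ ∈ irrConstituents ψ) : θ ∘ α ∈ irrConstituents ψ := by
  simpa only [show ψ ∘ α = ψ from funext hψ] using comp_mulEquiv_mem_irrConstituents hθ α

/-- Automorphisms of `G` fixing `ψ` permute the constituents of `ψ`; the inverse makes
precomposition a left action. -/
@[reducible] def irrConstituentsMulAction {P : Type*} [Group P] (β : P →* MulAut G) {ψ : G → ℂ}
    (hψ : ∀ a g, ψ (β a g) = ψ g) : MulAction P (irrConstituents ψ) where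
  smul a θ := ⟨θ.1 ∘ β a⁻¹, comp_mulAut_mem_irrConstituents (hψ _) θ.2⟩
  one_smul θ := Subtype.ext <| funext fun g => congrArg θ.1 (by simp)
  mul_smul a b θ := Subtype.ext <| funext fun g => congrArg θ.1 (by simp)

lemma irrConstituents_character_nonempty {V : Type} [AddCommGroup V] [Module ℂ V]
    [FiniteDimensional ℂ V] [Nontrivial V] (ρ : Representation ℂ G V) :
    (irrConstituents ρ.character).Nonempty := by
  have : Nontrivial ρ.asModule := inferInstanceAs (Nontrivial V)
  obtain ⟨S, hS⟩ := IsSemisimpleModule.exists_simple_submodule (MonoidAlgebra ℂ G) ρ.asModule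
  let R : Subrepresentation ρ := Subrepresentation.ofSubmodule' S
  have hR : IsAtom R :=
    (OrderIso.isAtom_iff Subrepresentation.subrepresentationSubmoduleOrderIso R).1
      (isSimpleModule_iff_isAtom.1 hS)
  have hirr := isIrreducible_toRepresentation_of_isAtom hR
  have hnontrivial :
      Nontrivial (Representation.IntertwiningMap R.toRepresentation ρ) := by
    refine ⟨subrepresentationInclusion R, 0, fun h => hR.1 ?_⟩
    rw [eq_bot_iff]
    intro v hv
    have hv0 : subrepresentationInclusion R ⟨v, hv⟩ = 0 := by rw [h]; rfl
    exact hv0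
  refine ⟨R.toRepresentation.character, ?_, ?_⟩
  · rw [isIrrChar_character_iff_charInner_self, charInner_character_eq_finrank,
      Representation.IsIrreducible.finrank_intertwiningMap_self, Nat.cast_one]
  · rw [charInner_character_eq_finrank, Nat.cast_ne_zero]
    exact Module.finrank_pos.ne'

lemma IsIrrChar.irrConstituents_charRes_nonempty {χ : G → ℂ} (hχ : IsIrrChar χ)
    (N : Subgroup G) : (irrConstituents (charRes N χ)).Nonempty := by
  obtain ⟨V, _, _, _, ρ, rfl⟩ := hχ.exists_character_eq
  have hnontrivial : Nontrivial V := by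
    have hdeg := hχ.apply_one_ne_zero
    rw [Representation.char_one, Nat.cast_ne_zero] at hdeg
    exact Module.nontrivial_of_finrank_pos (Nat.pos_of_ne_zero hdeg)
  exact irrConstituents_character_nonempty (ρ.comp N.subtype)

end Constituents

section ConjWeightedSum

variable {N : Type} {V W : Type*} [Group N] [Fintype N] [AddCommGroup V] [Module ℂ V]
  [AddCommGroup W] [Module ℂ W]

/-- The operator by which `∑ n, conj (f n) n ∈ ℂ[N]` acts on `τ`. The conjugate makes its trace
`|N|` times the inner product of the character of `τ` with `f`. -/
def conjWeightedSum (f : N → ℂ) (τ : Representation ℂ N V) : Module.End ℂ V :=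
  ∑ n, (starRingEnd ℂ) (f n) • τ n

lemma trace_conjWeightedSum (f : N → ℂ) (τ : Representation ℂ N V) :
    LinearMap.trace ℂ V (conjWeightedSum f τ) = Nat.card N * charInner N τ.character f := by
  rw [charInner, mul_inv_cancel_left₀ (NeZero.ne _), conjWeightedSum, map_sum]
  exact Finset.sum_congr rfl fun n _ => by rw [map_smul, smul_eq_mul, mul_comm]; rfl

lemma conjWeightedSum_intertwining (f : N → ℂ) {σ : Representation ℂ N W}
    {τ : Representation ℂ N V} (x : Representation.IntertwiningMap σ τ) (w : W) :
    x (conjWeightedSum f σ w) = conjWeightedSum f τ (x w) := by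
  simp only [conjWeightedSum, LinearMap.sum_apply, LinearMap.smul_apply, map_sum, map_smul,
    x.isIntertwining]

lemma commute_conjWeightedSum {f : N → ℂ} {τ : Representation ℂ N V} {α : MulAut N}
    {A : Module.End ℂ V} (hA : ∀ n, A * τ n = τ (α n) * A) (hf : ∀ n, f (α n) = f n) :
    Commute A (conjWeightedSum f τ) := by
  rw [commute_iff_eq, conjWeightedSum, Finset.mul_sum, Finset.sum_mul,
    ← Equiv.sum_comp α.toEquiv fun n => (starRingEnd ℂ) (f n) • τ n * A]
  refine Finset.sum_congr rfl fun n _ => ?_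
  simp [hA, hf]

end ConjWeightedSum

section Clifford

lemma exists_eq_smul_one_of_forall_commute {k G V : Type*} [Field k] [Monoid G] [AddCommGroup V]
    [Module k V] {ρ : Representation k G V}
    (hρ : Module.finrank k (Representation.IntertwiningMap ρ ρ) = 1) {T : Module.End k V}
    (hT : ∀ g, Commute (ρ g) T) : ∃ c : k, T = c • 1 := by
  have hnontrivial : Nontrivial (Representation.IntertwiningMap ρ ρ) :=
    Module.nontrivial_of_finrank_pos (R := k) (hρ ▸ one_pos)
  obtain ⟨c, hc⟩ := (finrank_eq_one_iff_of_nonzero' _ one_ne_zero).1 hρ ⟨T, fun g => (hT g).eq.symm⟩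
  exact ⟨c, congrArg Representation.IntertwiningMap.toLinearMap hc.symm⟩

variable {K : Type} [Group K] [Fintype K] {N : Subgroup K} [N.Normal] {χ : K → ℂ}

theorem IsIrrChar.charInner_charRes_mul_apply_one {θ f : N → ℂ} (hχ : IsIrrChar χ)
    (hθ : θ ∈ irrConstituents (charRes N χ)) (hf : ∀ k n, f (MulAut.conjNormal k n) = f n) :
    charInner N (charRes N χ) f * θ 1 = charInner N θ f * χ 1 := by
  obtain ⟨hθ, hmult⟩ := hθ
  obtain ⟨V, _, _, _, ρ, rfl⟩ := hχ.exists_character_eq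
  obtain ⟨W, _, _, _, σ, rfl⟩ := hθ.exists_character_eq
  let ρN : Representation ℂ N V := ρ.comp N.subtype
  change charInner N ρN.character _ ≠ 0 at hmult
  change charInner N ρN.character f * _ = _
  obtain ⟨c, hc⟩ := exists_eq_smul_one_of_forall_commute hχ.finrank_intertwiningMap_self
    (T := conjWeightedSum f ρN) fun k =>
      commute_conjWeightedSum (α := MulAut.conjNormal k) (fun n => by simp [ρN, ← map_mul]) (hf k)
  obtain ⟨d, hd⟩ := exists_eq_smul_one_of_forall_commute hθ.finrank_intertwiningMap_self
    (T := conjWeightedSum f σ) fun m =>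
      commute_conjWeightedSum (α := MulAut.conj m) (fun n => by simp [← map_mul])
        fun n => hf m n
  have hcd : c = d := by
    rw [charInner_character_eq_finrank, Nat.cast_ne_zero] at hmult
    obtain ⟨x, hx⟩ := (Module.finrank_pos_iff_exists_ne_zero (R := ℂ)).1 (Nat.pos_of_ne_zero hmult)
    obtain ⟨w, hw⟩ := DFunLike.ne_iff.1 hx
    have hxw := conjWeightedSum_intertwining f x w
    rw [hc, hd] at hxw
    simpa [smul_left_inj hw] using! hxw.symm
  have htrace_ρ := trace_conjWeightedSum f ρN
  have htrace_σ := trace_conjWeightedSum f σ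
  rw [hc, map_smul, LinearMap.trace_one, smul_eq_mul, ← ρ.char_one] at htrace_ρ
  rw [hd, map_smul, LinearMap.trace_one, smul_eq_mul, ← σ.char_one] at htrace_σ
  apply mul_left_cancel₀ (NeZero.ne (Nat.card N : ℂ))
  rw [← mul_assoc, ← htrace_ρ, ← mul_assoc, ← htrace_σ, hcd, mul_right_comm]

lemma IsIrrChar.charInner_charRes_comp_conjNormal (hχ : IsIrrChar χ) (k : K) (θ : N → ℂ) :
    charInner N (charRes N χ) (θ ∘ MulAut.conjNormal k) = charInner N (charRes N χ) θ := by
  have hinv : charRes N χ ∘ MulAut.conjNormal k = charRes N χ :=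
    funext fun n => hχ.apply_conj k n
  conv_lhs => rw [← hinv, charInner_comp_mulEquiv]

theorem IsIrrChar.exists_eq_comp_conjNormal {θ θ' : N → ℂ} (hχ : IsIrrChar χ)
    (hθ : θ ∈ irrConstituents (charRes N χ)) (hθ' : θ' ∈ irrConstituents (charRes N χ)) :
    ∃ k : K, θ' = θ ∘ MulAut.conjNormal k := by
  let f : N → ℂ := fun n => ∑ k : K, (θ ∘ MulAut.conjNormal k) n
  have hf (k : K) (n : N) : f (MulAut.conjNormal k n) = f n := by
    simp only [f]
    rw [← Equiv.sum_comp (Equiv.mulRight k) fun j => (θ ∘ MulAut.conjNormal j) n]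
    simp
  have hχf : charInner N (charRes N χ) f ≠ 0 := by
    simp only [f, charInner_sum_right, hχ.charInner_charRes_comp_conjNormal, Finset.sum_const,
      Finset.card_univ, nsmul_eq_mul]
    exact mul_ne_zero (NeZero.ne _) hθ.2
  have hθ'f : charInner N θ' f ≠ 0 := left_ne_zero_of_mul <|
    hχ.charInner_charRes_mul_apply_one hθ' hf ▸ mul_ne_zero hχf hθ'.1.apply_one_ne_zero
  rw [charInner_sum_right] at hθ'f
  obtain ⟨k, -, hk⟩ := Finset.exists_ne_zero_of_sum_ne_zero hθ'f
  exact ⟨k, by_contra fun hne => hk (hθ'.1.charInner_eq_zero_of_ne (hθ.1.comp_mulEquiv _) hne)⟩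

theorem IsIrrChar.card_irrConstituents_charRes_dvd_index (hχ : IsIrrChar χ) :
    Nat.card (irrConstituents (charRes N χ)) ∣ N.index := by
  let _ : MulAction K (irrConstituents (charRes N χ)) :=
    irrConstituentsMulAction MulAut.conjNormal fun k n => hχ.apply_conj k n
  have htransitive : MulAction.IsPretransitive K (irrConstituents (charRes N χ)) := by
    refine ⟨fun θ θ' => ?_⟩
    obtain ⟨k, hk⟩ := hχ.exists_eq_comp_conjNormal θ.2 θ'.2
    refine ⟨k⁻¹, Subtype.ext ?_⟩
    change θ.1 ∘ MulAut.conjNormal k⁻¹⁻¹ = θ'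
    rw [inv_inv, hk]
  obtain ⟨θ⟩ := (hχ.irrConstituents_charRes_nonempty N).to_subtype
  rw [← MulAction.index_stabilizer_of_transitive K θ]
  refine Subgroup.index_dvd_of_le fun m hm => MulAction.mem_stabilizer_iff.2 <| Subtype.ext <|
    funext fun n => ?_
  exact θ.2.1.apply_conj (⟨m, hm⟩⁻¹) n

end Clifford

section PGroup

variable {P : Type*} [Group P] {p : ℕ}

theorem IsIrrChar.exists_invariant_mem_irrConstituents_charRes {K : Type} [Group K] [Fintype K]
    {N : Subgroup K} [N.Normal] {χ : K → ℂ} (hp : p.Prime) (hP : IsPGroup p P)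
    (hindex : ¬ p ∣ N.index) (hχ : IsIrrChar χ) (β : P →* MulAut N)
    (hβ : ∀ a n, charRes N χ (β a n) = charRes N χ n) :
    ∃ θ ∈ irrConstituents (charRes N χ), ∀ a n, θ (β a n) = θ n := by
  let _ : MulAction P (irrConstituents (charRes N χ)) := irrConstituentsMulAction β hβ
  have : Fact p.Prime := ⟨hp⟩
  obtain ⟨θ, hθ⟩ := hP.nonempty_fixed_point_of_prime_not_dvd_card (irrConstituents (charRes N χ))
    fun h => hindex (h.trans hχ.card_irrConstituents_charRes_dvd_index)
  refine ⟨θ, θ.2, fun a n => ?_⟩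
  have hfix : θ.1 ∘ β a⁻¹⁻¹ = θ.1 := congrArg Subtype.val (hθ a⁻¹)
  rw [inv_inv] at hfix
  exact congrFun hfix n

variable {G : Type} [Group G]

theorem IsIrrChar.exists_invariant_mem_irrConstituents_comp_inclusion {N C : Subgroup G}
    [(N.subgroupOf C).Normal] [Fintype N] [Finite C] (hp : p.Prime) (hP : IsPGroup p P)
    (hNC : N ≤ C) (hindex : ¬ p ∣ N.relIndex C) {χ : C → ℂ} (hχ : IsIrrChar χ)
    (β : P →* MulAut N)
    (hβ : ∀ a n, χ (Subgroup.inclusion hNC (β a n)) = χ (Subgroup.inclusion hNC n)) :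
    ∃ θ ∈ irrConstituents (χ ∘ Subgroup.inclusion hNC), ∀ a n, θ (β a n) = θ n := by
  have := Fintype.ofFinite C
  let ε : N.subgroupOf C ≃* N := Subgroup.subgroupOfEquivOfLe hNC
  obtain ⟨θ, hθ, hinv⟩ := hχ.exists_invariant_mem_irrConstituents_charRes hp hP hindex
    ((MulAut.congr ε.symm).toMonoidHom.comp β) fun a n => hβ a (ε n)
  refine ⟨θ ∘ ε.symm, comp_mulEquiv_mem_irrConstituents hθ ε.symm, fun a n => ?_⟩
  simpa using hinv a (ε.symm n)

/-- The restriction to a `P`-invariant subgroup of an action of `P` by automorphisms. -/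
def restrictMulAut (φ : P →* MulAut G) (N : Subgroup G) (hN : ∀ a, ∀ n ∈ N, φ a n ∈ N) :
    P →* MulAut N where
  toFun a :=
    { toFun := fun n => ⟨φ a n, hN a n n.2⟩
      invFun := fun n => ⟨φ a⁻¹ n, hN a⁻¹ n n.2⟩
      left_inv := fun n => Subtype.ext (by simp)
      right_inv := fun n => Subtype.ext (by simp)
      map_mul' := fun m n => Subtype.ext (by simp) }
  map_one' := by ext n; simp
  map_mul' a b := by ext n; simp

end PGroup

theorem stmt_11_general {G P : Type} [Group G] [Group P] (p : ℕ) (hp : p.Prime)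
    (hPp : IsPGroup p P) (φ : P →* MulAut G) (N C : Subgroup G) [(N.subgroupOf C).Normal]
    [Fintype N] [Fintype C] (hNinv : ∀ a : P, ∀ n ∈ N, φ a n ∈ N) (hNC : N ≤ C)
    (hindex : ¬ p ∣ N.relIndex C) (χ : G → ℂ) (χstar : C → ℂ) (hχs : IsIrrChar χstar)
    (hχsP : ∀ a : P, ∀ c m : C, (m : G) = φ a (c : G) → χstar m = χstar c)
    (e : ℕ) (he : ¬ p ∣ e) (Δ Ξ : C → ℂ) (hΔ : IsCharOrZero Δ)
    (hdec : ∀ c : C, χ (c : G) = e * χstar c + p * Δ c + Ξ c)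
    (hΞ : ∀ η : C → ℂ, IsIrrChar η → charInner C Ξ η ≠ 0 →
      ¬ ∃ θ : N → ℂ, IsIrrChar θ ∧
        (∀ a : P, ∀ n m : N, (m : G) = φ a (n : G) → θ m = θ n) ∧
        charInner N (fun n : N => η ⟨(n : G), hNC n.2⟩) θ ≠ 0) :
    ∃ k : ℕ, charInner C (charRes C χ) χstar = k ∧ ¬ p ∣ k := by
  obtain ⟨θ, hθ, hinv⟩ := hχs.exists_invariant_mem_irrConstituents_comp_inclusion hp hPp hNC
    hindex (restrictMulAut φ N hNinv) fun a _ => hχsP a _ _ rfl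
  have hθinv (a : P) (n m : N) (hm : (m : G) = φ a n) : θ m = θ n := by
    obtain rfl : m = restrictMulAut φ N hNinv a n := Subtype.ext hm
    exact hinv a n
  have hΞ_zero : charInner C Ξ χstar = 0 :=
    by_contra fun h => hΞ χstar hχs h ⟨θ, hθ.1, hθinv, hθ.2⟩
  obtain ⟨m, hm⟩ := hΔ.exists_charInner_eq_natCast hχs
  refine ⟨e + p * m, ?_, fun h => he ((Nat.dvd_add_left (dvd_mul_right p m)).1 h)⟩
  rw [show charRes C χ = fun c => e * χstar c + p * Δ c + Ξ c from funext hdec,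
    charInner_add_left, charInner_add_left, charInner_const_mul_left, charInner_const_mul_left,
    hχs.charInner_self, hm, hΞ_zero]
  push_cast
  ring

/-- Refinement of Theorem E of Navarro–Späth–Vallejo: in the relative Glauberman
correspondence situation, with `χ|_C = e·χ* + pΔ + Ξ`, `p ∤ e`, and no constituent of `Ξ`
over a `P`-invariant character of `N`, the multiplicity `[χ|_C, χ*]` is prime to `p`. -/
theorem stmt_11 {G P : Type} [Group G] [Fintype G] [Group P] [Fintype P] (p : ℕ)
    (hp : p.Prime) (hPp : IsPGroup p P) (φ : P →* MulAut G)
    (N : Subgroup G) [N.Normal] (hNinv : ∀ a : P, ∀ n ∈ N, φ a n ∈ N)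
    (hquot : ¬ p ∣ N.index)
    (C : Subgroup G) (hNC : N ≤ C)
    (hC : ∀ g : G, g ∈ C ↔ ∀ a : P, (φ a g) * g⁻¹ ∈ N)
    (χ : G → ℂ) (hχ : IsIrrChar χ) (hχP : ∀ a : P, ∀ g : G, χ (φ a g) = χ g)
    (χstar : C → ℂ) (hχs : IsIrrChar χstar)
    (hχsP : ∀ a : P, ∀ c m : C, (m : G) = φ a (c : G) → χstar m = χstar c)
    (e : ℕ) (he : ¬ p ∣ e) (Δ Ξ : C → ℂ) (hΔ : IsCharOrZero Δ) (hΞ : IsCharOrZero Ξ)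
    (hdec : ∀ c : C, χ (c : G) = e * χstar c + p * Δ c + Ξ c)
    (hΞ' : ∀ η : C → ℂ, IsIrrChar η → charInner C Ξ η ≠ 0 →
      ¬ ∃ θ : N → ℂ, IsIrrChar θ ∧
        (∀ a : P, ∀ n m : N, (m : G) = φ a (n : G) → θ m = θ n) ∧
        charInner N (fun n : N => η ⟨(n : G), hNC n.2⟩) θ ≠ 0) :
    ∃ k : ℕ, charInner C (charRes C χ) χstar = k ∧ ¬ p ∣ k := by
  exact stmt_11_general p hp hPp φ N C hNinv hNC
    (fun h => hquot (h.trans (Subgroup.relIndex_dvd_index_of_le hNC))) χ χstar hχs hχsP e he Δ Ξ hΔ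
    hdec hΞ'
end
end
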